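/- Let D = D₁×⋯×D_n ⊂ ℂ^n be an open polydisc centered at the origin, Γ ⊂ ℂ^n∖{0} an open convex cone, and V = D×Γ. Fix integers p ≥ 0 and q ≥ 1. Let f = Σ_{I,J} f_{IJ} dz^I∧dz̄^J be a (p,q)-form in the z-variables whose coefficients f_{IJ} (I,J strictly increasing multi-indices in {1,…,n} of lengths p and q) all belong to 𝔑^∞(V) and are defined and of class C^∞_z𝒪_ζ on a common infinitesimal wedge W of type V, and assume ∂̄_z f = 0 on W, i.e. for every I and every strictly increasing multi-index K = (k₁<⋯<k_{q+1}) one has Σ_{ℓ=1}^{q+1} (−1)^{ℓ−1} ∂f_{I, K∖{k_ℓ}}/∂z̄_{k_ℓ} = 0. Then for every polydisc D' with closure contained in D there exist functions u_{IL} ∈ 𝔑^∞(D'×Γ) (L strictly increasing of length q−1) such that ∂̄_z u = f on an infinitesimal wedge of type D'×Γ, i.e. for every I and every strictly increasing J = (j₁<⋯<j_q), Σ_{ℓ=1}^{q} (−1)^{ℓ−1} ∂u_{I, J∖{j_ℓ}}/∂z̄_{j_ℓ} = f_{IJ}. -/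

import Mathlib

open Complex

noncomputable section

/-- `ℂ^n`. -/
abbrev Cn (n : ℕ) : Type := Fin n → ℂ

/-- The space `ℂ^n_z × ℂ^n_ζ`. -/
abbrev Pt (n : ℕ) : Type := Cn n × Cn n

/-- The Euclidean norm of `ζ ∈ ℂ^n`. -/
def eucNorm {n : ℕ} (ζ : Cn n) : ℝ := Real.sqrt (∑ i, Complex.normSq (ζ i))

/-- `V` is a cone: stable under the dilations `(z, ζ) ↦ (z, tζ)`, `t > 0`. -/
def IsCone {n : ℕ} (V : Set (Pt n)) : Prop :=
  ∀ p ∈ V, ∀ t : ℝ, 0 < t → (p.1, t • p.2) ∈ V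

/-- `K` is a relatively compact subset of `V`. -/
def RelCpt {n : ℕ} (K V : Set (Pt n)) : Prop :=
  IsCompact (closure K) ∧ closure K ⊆ V

/-- `W` is an infinitesimal wedge of type `V`. -/
def IsInfWedge {n : ℕ} (V W : Set (Pt n)) : Prop :=
  W ⊆ V ∧ ∀ K : Set (Pt n), RelCpt K V →
    ∃ δ : ℝ, 0 < δ ∧ ∀ p ∈ K, ∀ t : ℝ, δ < t → (p.1, t • p.2) ∈ W

/-- `V' ⋐cone V` : `V'` is a relatively compact cone in `V`. -/
def ConeRelCpt {n : ℕ} (V' V : Set (Pt n)) : Prop :=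
  ∃ K : Set (Pt n), RelCpt K V ∧
    V' = {p : Pt n | ∃ t : ℝ, 0 < t ∧ ∃ q ∈ K, p = (q.1, t • q.2)}

/-- Wirtinger derivative `∂/∂z_i` in the first variable. -/
def dz {n : ℕ} (i : Fin n) (f : Pt n → ℂ) : Pt n → ℂ := fun p =>
  (1 / 2 : ℂ) * (fderiv ℝ f p ((Pi.single i 1 : Cn n), 0)
    - Complex.I * fderiv ℝ f p ((Pi.single i Complex.I : Cn n), 0))

/-- Wirtinger derivative `∂/∂z̄_i` in the first variable. -/
def dzbar {n : ℕ} (i : Fin n) (f : Pt n → ℂ) : Pt n → ℂ := fun p =>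
  (1 / 2 : ℂ) * (fderiv ℝ f p ((Pi.single i 1 : Cn n), 0)
    + Complex.I * fderiv ℝ f p ((Pi.single i Complex.I : Cn n), 0))

/-- The iterated mixed derivative `∂^α_z ∂^β_z̄` in the first variable. -/
def mixedDeriv {n : ℕ} (α β : Fin n → ℕ) (f : Pt n → ℂ) : Pt n → ℂ :=
  ((List.ofFn fun i => (dz i)^[α i]) ++ (List.ofFn fun i => (dzbar i)^[β i])).foldr
    (fun d g => d g) f

/-- `f ∈ C^∞_z 𝒪_ζ (W)` : `f` is `C^∞` on `W` and holomorphic in the second variable. -/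
def CinfO {n : ℕ} (W : Set (Pt n)) (f : Pt n → ℂ) : Prop :=
  ContDiffOn ℝ (⊤ : ℕ∞) f W ∧
  ∀ z : Cn n, DifferentiableOn ℂ (fun ζ => f (z, ζ)) {ζ : Cn n | (z, ζ) ∈ W}

/-- `f` is a null-symbol of `C^∞`-type on `V`, defined on the infinitesimal wedge `W`. -/
def IsNullSymbolInf {n : ℕ} (V W : Set (Pt n)) (f : Pt n → ℂ) : Prop :=
  IsInfWedge V W ∧ CinfO W f ∧
  ∀ V' : Set (Pt n), IsOpen V' → IsCone V' → ConeRelCpt V' V →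
    ∃ W' : Set (Pt n), W' ⊆ W ∧ IsInfWedge V' W' ∧
      ∀ α β : Fin n → ℕ, ∃ h C : ℝ, 0 < h ∧ 0 < C ∧
        ∀ p ∈ W', ‖mixedDeriv α β f p‖ ≤ C * Real.exp (-h * eucNorm p.2)

/-- `f` is a symbol of `C^∞`-type on `V`, defined on the infinitesimal wedge `W`. -/
def IsSymbolInf {n : ℕ} (V W : Set (Pt n)) (f : Pt n → ℂ) : Prop :=
  IsInfWedge V W ∧ CinfO W f ∧
  (∀ V' : Set (Pt n), IsOpen V' → IsCone V' → ConeRelCpt V' V →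
    ∃ W' : Set (Pt n), W' ⊆ W ∧ IsInfWedge V' W' ∧
      ∀ α β : Fin n → ℕ, ∀ h : ℝ, 0 < h → ∃ C : ℝ, 0 < C ∧
        ∀ p ∈ W', ‖mixedDeriv α β f p‖ ≤ C * Real.exp (h * eucNorm p.2)) ∧
  ∀ i : Fin n, ∃ Wi : Set (Pt n), IsNullSymbolInf V Wi (dzbar i f)

/-!
As in the Dolbeault–Grothendieck lemma, the differentials `dz̄_k` are removed one at a time. Write a
closed form as `f = dz̄_k ∧ g + h` with `g`, `h` free of `dz̄_k`, and replace it by `f - ∂̄(T_k g)`,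
where `T_k g` is the Cauchy transform in `z_k` of `g` times a cut-off equal to `1` on a smaller
polydisc. There `∂̄_k T_k g = g` (Cauchy–Pompeiu), so the new form is free of `dz̄_k`; it also stays
free of each `dz̄_j` removed before, since closedness of `f` makes `g` holomorphic in `z_j`.

The cut-off does not involve `ζ`, so `T_k` preserves holomorphy in `ζ` and exponential decay of the
`z`-derivatives on each cone over a compact set, as long as the domain is a product `P × G` with `P`
fixed. Taking for `G` the set of all `ζ` with `P' × {ζ}` in the interior of `W`, where `P'` is a
compact neighbourhood of the closure of the smaller polydisc, loses nothing: `G` is again an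
infinitesimal wedge.
-/

section ComplexDerivatives

open Filter Topology
open scoped ContDiff

variable {E F : Type*} [NormedAddCommGroup E] [NormedSpace ℝ E]
  [NormedAddCommGroup F] [NormedSpace ℝ F] {f g : E → ℂ} {p : E} {X Y : E × E}

/-- The derivative of `f` along the constant complex vector field `X.1 + i X.2`. -/
def complexDeriv (X : E × E) (f : E → ℂ) : E → ℂ :=
  fun p => fderiv ℝ f p X.1 + I * fderiv ℝ f p X.2

theorem complexDeriv_congr (h : f =ᶠ[𝓝 p] g) : complexDeriv X f =ᶠ[𝓝 p] complexDeriv X g := by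
  filter_upwards [h.fderiv (𝕜 := ℝ)] with x hx
  simp only [complexDeriv, hx]

theorem complexDeriv_zero : complexDeriv X 0 = 0 := by
  ext; simp [complexDeriv]

theorem contDiffAt_complexDeriv (hf : ContDiffAt ℝ ∞ f p) :
    ContDiffAt ℝ ∞ (complexDeriv X f) p := by
  have hf' : ContDiffAt ℝ ∞ (fderiv ℝ f) p := hf.fderiv_right (by simp)
  exact (hf'.clm_apply contDiffAt_const).add
    (contDiffAt_const.mul (hf'.clm_apply contDiffAt_const))

theorem eventually_differentiableAt (hf : ContDiffAt ℝ ∞ f p) :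
    ∀ᶠ x in 𝓝 p, DifferentiableAt ℝ f x := by
  filter_upwards [(hf.of_le (m := 1) (by simp)).eventually (by simp)] with x hx
  exact hx.differentiableAt (by simp)

theorem complexDeriv_add (hf : ContDiffAt ℝ ∞ f p) (hg : ContDiffAt ℝ ∞ g p) :
    complexDeriv X (f + g) =ᶠ[𝓝 p] complexDeriv X f + complexDeriv X g := by
  filter_upwards [eventually_differentiableAt hf, eventually_differentiableAt hg] with x hfx hgx
  simp only [complexDeriv, fderiv_add hfx hgx, Pi.add_apply, add_apply]
  ring

theorem complexDeriv_const_smul (c : ℂ) : complexDeriv X (c • f) = c • complexDeriv X f := by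
  ext x
  simp only [complexDeriv, fderiv_const_smul_field, Pi.smul_apply, smul_apply,
    smul_eq_mul]
  ring

theorem complexDeriv_mul (hf : ContDiffAt ℝ ∞ f p) (hg : ContDiffAt ℝ ∞ g p) :
    complexDeriv X (f * g) =ᶠ[𝓝 p] complexDeriv X f * g + f * complexDeriv X g := by
  filter_upwards [eventually_differentiableAt hf, eventually_differentiableAt hg] with x hfx hgx
  simp only [complexDeriv, fderiv_mul hfx hgx, Pi.add_apply, Pi.mul_apply,
    add_apply, smul_apply, smul_eq_mul]
  ring

theorem complexDeriv_sum {ι : Type*} (s : Finset ι) {φ : ι → E → ℂ}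
    (hφ : ∀ i ∈ s, ContDiffAt ℝ ∞ (φ i) p) :
    complexDeriv X (∑ i ∈ s, φ i) =ᶠ[𝓝 p] ∑ i ∈ s, complexDeriv X (φ i) := by
  filter_upwards [(eventually_all_finset s).2 fun i hi => eventually_differentiableAt (hφ i hi)]
    with x hx
  simp [complexDeriv, fderiv_sum hx, Finset.sum_add_distrib, Finset.mul_sum]

theorem fderiv_complexDeriv (hf : ContDiffAt ℝ 2 f p) (v : E) :
    fderiv ℝ (complexDeriv X f) p v =
      fderiv ℝ (fderiv ℝ f) p v X.1 + I * fderiv ℝ (fderiv ℝ f) p v X.2 := by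
  have hf' : DifferentiableAt ℝ (fderiv ℝ f) p :=
    (hf.fderiv_right (m := 1) (by norm_num)).differentiableAt (by simp)
  have hu (u : E) : HasFDerivAt (fun x => fderiv ℝ f x u) _ p :=
    hf'.hasFDerivAt.clm_apply (hasFDerivAt_const u p)
  have hX : HasFDerivAt (complexDeriv X f) _ p := (hu X.1).add ((hu X.2).const_mul I)
  simp [hX.fderiv]

theorem complexDeriv_comm (hf : ContDiffAt ℝ ∞ f p) :
    complexDeriv X (complexDeriv Y f) =ᶠ[𝓝 p] complexDeriv Y (complexDeriv X f) := by
  filter_upwards [(hf.of_le (m := 2) ENat.LEInfty.out).eventually (by simp)] with x hx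
  have hsymm : IsSymmSndFDerivAt ℝ f x := hx.isSymmSndFDerivAt (by simp)
  rw [complexDeriv, complexDeriv]
  simp only [fderiv_complexDeriv hx, hsymm.eq X.1, hsymm.eq X.2]
  ring

theorem complexDeriv_comp_continuousLinearMap (L : E →L[ℝ] F) {f : F → ℂ}
    (hf : Differentiable ℝ f) :
    complexDeriv X (f ∘ L) = complexDeriv (L X.1, L X.2) f ∘ L := by
  ext x
  simp [complexDeriv, fderiv_comp x (hf (L x)) L.differentiableAt]

/-- The iterated derivative of `f` along the constant complex vector fields listed in `w`, the head
of the list being applied first. -/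
def complexDerivs (w : List (E × E)) (f : E → ℂ) : E → ℂ :=
  w.foldl (fun g X => complexDeriv X g) f

theorem complexDerivs_congr (h : f =ᶠ[𝓝 p] g) (w : List (E × E)) :
    complexDerivs w f =ᶠ[𝓝 p] complexDerivs w g := by
  induction w generalizing f g with
  | nil => exact h
  | cons X _ ih => exact ih (complexDeriv_congr h)

theorem complexDerivs_zero (w : List (E × E)) : complexDerivs w (0 : E → ℂ) = 0 := by
  induction w with
  | nil => rfl
  | cons X w ih => rwa [complexDerivs, List.foldl_cons, complexDeriv_zero]

theorem complexDerivs_add (hf : ContDiffAt ℝ ∞ f p) (hg : ContDiffAt ℝ ∞ g p)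
    (w : List (E × E)) :
    complexDerivs w (f + g) =ᶠ[𝓝 p] complexDerivs w f + complexDerivs w g := by
  induction w generalizing f g with
  | nil => rfl
  | cons X w ih =>
    exact (complexDerivs_congr (complexDeriv_add hf hg) w).trans
      (ih (contDiffAt_complexDeriv hf) (contDiffAt_complexDeriv hg))

theorem complexDerivs_const_smul (c : ℂ) (w : List (E × E)) :
    complexDerivs w (c • f) = c • complexDerivs w f := by
  induction w generalizing f with
  | nil => rfl
  | cons X w ih =>
    rw [complexDerivs, List.foldl_cons, complexDeriv_const_smul]
    exact ih

theorem complexDerivs_perm (hf : ContDiffAt ℝ ∞ f p) {w w' : List (E × E)} (h : w.Perm w') :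
    complexDerivs w f =ᶠ[𝓝 p] complexDerivs w' f := by
  induction h generalizing f with
  | nil => rfl
  | cons X _ ih => exact ih (contDiffAt_complexDeriv hf)
  | swap X Y w => exact complexDerivs_congr (complexDeriv_comm hf) w
  | trans _ _ ih ih' => exact (ih hf).trans (ih' hf)

theorem contDiff_complexDeriv (hf : ContDiff ℝ ∞ f) : ContDiff ℝ ∞ (complexDeriv X f) :=
  contDiff_iff_contDiffAt.2 fun _ => contDiffAt_complexDeriv hf.contDiffAt

theorem hasCompactSupport_complexDeriv (hf : HasCompactSupport f) :
    HasCompactSupport (complexDeriv X f) :=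
  (hf.fderiv_apply ℝ X.1).add (hf.fderiv_apply ℝ X.2).mul_left

theorem exists_norm_complexDerivs_comp_le {χ : F → ℂ} (hχ : ContDiff ℝ ∞ χ)
    (hχc : HasCompactSupport χ) (L : E →L[ℝ] F) (w : List (E × E)) :
    ∃ C, ∀ x, ‖complexDerivs w (χ ∘ L) x‖ ≤ C := by
  induction w generalizing χ with
  | nil =>
    obtain ⟨C, hC⟩ := hχc.exists_bound_of_continuous hχ.continuous
    exact ⟨C, fun x => hC (L x)⟩
  | cons X w ih =>
    rw [complexDerivs, List.foldl_cons,
      complexDeriv_comp_continuousLinearMap L (hχ.differentiable (by simp))]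
    exact ih (contDiff_complexDeriv hχ) (hasCompactSupport_complexDeriv hχc)

end ComplexDerivatives

section CauchyPompeiu

open MeasureTheory Set
open scoped ComplexConjugate Real

/-- The fundamental solution `1 / (π w)` of `∂/∂w̄`. -/
def cauchyKernel (w : ℂ) : ℂ := ((π : ℂ) * w)⁻¹

theorem locallyIntegrable_cauchyKernel : LocallyIntegrable cauchyKernel := by
  refine locallyIntegrable_of_norm_le_rpow (C := π⁻¹) (α := 1) (by simp) (by simp)
    (.of_forall fun w => ?_)
    (measurable_const.mul measurable_id).inv.aestronglyMeasurable
  rw [cauchyKernel, norm_inv, norm_mul, mul_inv, Real.rpow_neg (norm_nonneg w), Real.rpow_one]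
  simp [abs_of_pos Real.pi_pos]

theorem map_add_I_mul_map_I_mul (L : ℂ →L[ℝ] ℂ) (e : ℂ) :
    L e + I * L (I * e) = conj e * (L 1 + I * L I) := by
  have hL (z : ℂ) : L z = z.re * L 1 + z.im * L I := by
    conv_lhs => rw [show z = z.re • (1 : ℂ) + z.im • I by simp, map_add, map_smul, map_smul]
    simp
  have hconj : conj e = e.re - e.im * I := by
    apply Complex.ext <;> simp
  rw [hL e, hL (I * e), hconj, I_mul_re, I_mul_im]
  push_cast
  linear_combination (e.im * L I : ℂ) * I_sq

theorem integral_Ioi_fderiv_smul_eq_neg {E F : Type*} [NormedAddCommGroup E] [NormedSpace ℝ E]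
    [NormedAddCommGroup F] [NormedSpace ℝ F] [CompleteSpace F] {ψ : E → F}
    (hψ : ContDiff ℝ 1 ψ) (hψc : HasCompactSupport ψ) {e : E} (he : e ≠ 0) :
    ∫ r in Ioi (0 : ℝ), fderiv ℝ ψ (r • e) e = -ψ 0 := by
  have hderiv (r : ℝ) : deriv (fun s : ℝ => ψ (s • e)) r = fderiv ℝ ψ (r • e) e := by
    have hline : HasDerivAt (fun s : ℝ => s • e) e r := by
      simpa using (hasDerivAt_id r).smul_const e
    exact ((hψ.differentiable one_ne_zero _).hasFDerivAt.comp_hasDerivAt r hline).deriv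
  have hline := (hψc.comp_isClosedEmbedding (isClosedEmbedding_smul_left he)).integral_Ioi_deriv_eq
    (f := fun s : ℝ => ψ (s • e)) (hψ.comp (by fun_prop)) 0
  simpa only [hderiv, zero_smul] using hline

theorem integral_fderiv_circleMap_eq_zero {ψ : ℂ → ℂ} (hψ : ContDiff ℝ 1 ψ) {r : ℝ}
    (hr : r ≠ 0) :
    ∫ θ in (-π)..π, fderiv ℝ ψ (circleMap 0 r θ) (I * circleMap 0 1 θ) = 0 := by
  have hderiv (θ : ℝ) : HasDerivAt (fun θ => ψ (circleMap 0 r θ))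
      (r * fderiv ℝ ψ (circleMap 0 r θ) (I * circleMap 0 1 θ)) θ := by
    have hvelocity : circleMap 0 r θ * I = r • (I * circleMap 0 1 θ) := by
      simp only [circleMap_zero, real_smul, ofReal_one]
      ring
    rw [← real_smul, ← map_smul, ← hvelocity]
    exact (hψ.differentiable one_ne_zero _).hasFDerivAt.comp_hasDerivAt θ
      (hasDerivAt_circleMap 0 r θ)
  have hcont : Continuous fun θ => fderiv ℝ ψ (circleMap 0 r θ) (I * circleMap 0 1 θ) :=
    ((hψ.continuous_fderiv one_ne_zero).comp (by fun_prop)).clm_apply (by fun_prop)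
  have hint := intervalIntegral.integral_eq_sub_of_hasDerivAt (a := -π) (b := π)
    (fun θ _ => hderiv θ) ((continuous_const.mul hcont).intervalIntegrable _ _)
  have hperiod : circleMap 0 r π = circleMap 0 r (-π) := by
    rw [← periodic_circleMap 0 r (-π)]
    ring_nf
  rw [hperiod, sub_self, intervalIntegral.integral_const_mul] at hint
  exact (mul_eq_zero.1 hint).resolve_left (by exact_mod_cast hr)

theorem integrableOn_Ioi_prod_Ioo_fderiv_circleMap {ψ : ℂ → ℂ} (hψ : ContDiff ℝ 1 ψ)
    (hψc : HasCompactSupport ψ) {u : ℝ → ℂ} (hu : Continuous u) (a b : ℝ) :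
    IntegrableOn (fun p : ℝ × ℝ => fderiv ℝ ψ (circleMap 0 p.1 p.2) (u p.2))
      (Ioi 0 ×ˢ Ioo a b) := by
  obtain ⟨R, hR⟩ := (hψc.fderiv (𝕜 := ℝ)).isCompact.isBounded.exists_norm_le
  have hcont : Continuous fun p : ℝ × ℝ => fderiv ℝ ψ (circleMap 0 p.1 p.2) (u p.2) :=
    ((hψ.continuous_fderiv one_ne_zero).comp (by unfold circleMap; fun_prop)).clm_apply
      (by fun_prop)
  refine IntegrableOn.of_forall_sdiff_eq_zero (s := Icc 0 R ×ˢ Icc a b)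
    (hcont.continuousOn.integrableOn_compact (isCompact_Icc.prod isCompact_Icc))
    (measurableSet_Ioi.prod measurableSet_Ioo) ?_
  rintro ⟨r, θ⟩ ⟨⟨hr, hθ⟩, hout⟩
  have hRr : R < r := lt_of_not_ge fun h =>
    hout ⟨⟨(mem_Ioi.1 hr).le, h⟩, Ioo_subset_Icc_self hθ⟩
  have hnot : circleMap 0 r θ ∉ tsupport (fderiv ℝ ψ) := fun h =>
    absurd (hR _ h) (by simpa [abs_of_pos (mem_Ioi.1 hr)] using hRr)
  simp [image_eq_zero_of_notMem_tsupport hnot]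

theorem integral_Ioi_prod_Ioo_fderiv_circleMap_radial {ψ : ℂ → ℂ} (hψ : ContDiff ℝ 1 ψ)
    (hψc : HasCompactSupport ψ) :
    ∫ p in Ioi (0 : ℝ) ×ˢ Ioo (-π) π,
      fderiv ℝ ψ (circleMap 0 p.1 p.2) (circleMap 0 1 p.2) = -(2 * π) * ψ 0 := by
  have hint := integrableOn_Ioi_prod_Ioo_fderiv_circleMap hψ hψc (continuous_circleMap 0 1) (-π) π
  have hray (θ : ℝ) : ∫ r in Ioi (0 : ℝ), fderiv ℝ ψ (circleMap 0 r θ) (circleMap 0 1 θ) =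
      -ψ 0 := by
    rw [← integral_Ioi_fderiv_smul_eq_neg hψ hψc (circleMap_ne_center one_ne_zero (θ := θ))]
    simp [circleMap_zero]
  rw [Measure.volume_eq_prod] at hint ⊢
  rw [← setIntegral_prod_swap]
  refine (setIntegral_prod _ hint.swap).trans ?_
  simp only [Function.comp_apply, Prod.swap_prod_mk, hray, setIntegral_const, measureReal_def,
    Real.volume_Ioo, sub_neg_eq_add, real_smul]
  rw [ENNReal.toReal_ofReal (by positivity)]
  push_cast
  ring

theorem integral_Ioi_prod_Ioo_fderiv_circleMap_angular {ψ : ℂ → ℂ} (hψ : ContDiff ℝ 1 ψ)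
    (hψc : HasCompactSupport ψ) :
    ∫ p in Ioi (0 : ℝ) ×ˢ Ioo (-π) π,
      fderiv ℝ ψ (circleMap 0 p.1 p.2) (I * circleMap 0 1 p.2) = 0 := by
  have hint := integrableOn_Ioi_prod_Ioo_fderiv_circleMap hψ hψc
    (u := fun θ => I * circleMap 0 1 θ) (by fun_prop) (-π) π
  rw [Measure.volume_eq_prod] at hint ⊢
  rw [setIntegral_prod _ hint]
  refine setIntegral_eq_zero_of_forall_eq_zero fun r hr => ?_
  have hcircle := integral_fderiv_circleMap_eq_zero hψ (ne_of_gt hr)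
  rwa [intervalIntegral.integral_of_le (by linarith [Real.pi_pos]),
    integral_Ioc_eq_integral_Ioo] at hcircle

theorem smul_cauchyKernel_mul_circleMap (L : ℂ →L[ℝ] ℂ) {r : ℝ} (hr : r ≠ 0) (θ : ℝ) :
    r • (cauchyKernel (circleMap 0 r θ) * (L (1 / 2) + I * L (I / 2))) =
      (2 * π : ℂ)⁻¹ * (L (circleMap 0 1 θ) + I * L (I * circleMap 0 1 θ)) := by
  have hhalf (v : ℂ) : L (v / 2) = L v / 2 := by
    rw [show v / 2 = (2⁻¹ : ℝ) • v by simp; ring, map_smul, real_smul]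
    push_cast
    ring
  have hconj : conj (circleMap 0 1 θ) = (circleMap 0 1 θ)⁻¹ := by
    rw [inv_def, normSq_eq_norm_sq]
    simp
  have hr' : (r : ℂ) ≠ 0 := ofReal_ne_zero.2 hr
  rw [map_add_I_mul_map_I_mul, hconj, hhalf, hhalf, cauchyKernel, real_smul, circleMap_zero,
    circleMap_zero, ofReal_one, one_mul]
  field_simp

theorem integral_cauchyKernel_mul_dbar {ψ : ℂ → ℂ} (hψ : ContDiff ℝ 1 ψ)
    (hψc : HasCompactSupport ψ) :
    ∫ w, cauchyKernel w * complexDeriv (1 / 2, I / 2) ψ w = -ψ 0 := by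
  have hpolar : ∀ p ∈ Ioi (0 : ℝ) ×ˢ Ioo (-π) π,
      p.1 • (cauchyKernel (Complex.polarCoord.symm p) *
        complexDeriv (1 / 2, I / 2) ψ (Complex.polarCoord.symm p)) =
      (2 * π : ℂ)⁻¹ * (fderiv ℝ ψ (circleMap 0 p.1 p.2) (circleMap 0 1 p.2) +
        I * fderiv ℝ ψ (circleMap 0 p.1 p.2) (I * circleMap 0 1 p.2)) := by
    rintro ⟨r, θ⟩ ⟨hr, -⟩
    have hsymm : Complex.polarCoord.symm (r, θ) = circleMap 0 r θ := by
      simp [Complex.polarCoord_symm_apply, circleMap_zero, exp_mul_I]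
    rw [hsymm]
    exact smul_cauchyKernel_mul_circleMap _ (ne_of_gt hr) θ
  have hradial := integrableOn_Ioi_prod_Ioo_fderiv_circleMap hψ hψc
    (continuous_circleMap 0 1) (-π) π
  have hangular := integrableOn_Ioi_prod_Ioo_fderiv_circleMap hψ hψc
    (u := fun θ => I * circleMap 0 1 θ) (by fun_prop) (-π) π
  rw [← Complex.integral_comp_polarCoord_symm, polarCoord_target,
    setIntegral_congr_fun (measurableSet_Ioi.prod measurableSet_Ioo) hpolar,
    integral_const_mul, integral_add hradial (hangular.const_mul I), integral_const_mul,
    integral_Ioi_prod_Ioo_fderiv_circleMap_radial hψ hψc,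
    integral_Ioi_prod_Ioo_fderiv_circleMap_angular hψ hψc]
  have hpi : (π : ℂ) ≠ 0 := ofReal_ne_zero.2 Real.pi_ne_zero
  field_simp
  ring

theorem integral_cauchyKernel_mul_dbar_sub {ψ : ℂ → ℂ} (hψ : ContDiff ℝ 1 ψ)
    (hψc : HasCompactSupport ψ) (z : ℂ) :
    ∫ w, cauchyKernel w * complexDeriv (1 / 2, I / 2) ψ (z - w) = ψ z := by
  have hreflect (w : ℂ) : complexDeriv (1 / 2, I / 2) (fun w => ψ (z - w)) w =
      -complexDeriv (1 / 2, I / 2) ψ (z - w) := by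
    have hsub : HasFDerivAt (fun w => z - w) (-ContinuousLinearMap.id ℝ ℂ) w :=
      (hasFDerivAt_id w).const_sub z
    have hcomp : HasFDerivAt (fun w => ψ (z - w)) _ w :=
      (hψ.differentiable one_ne_zero (z - w)).hasFDerivAt.comp w hsub
    simp only [complexDeriv, hcomp.fderiv, ContinuousLinearMap.comp_neg,
      ContinuousLinearMap.comp_id, neg_apply, mul_neg]
    ring
  have h := integral_cauchyKernel_mul_dbar (ψ := fun w => ψ (z - w)) (by fun_prop)
    (hψc.comp_homeomorph (Homeomorph.subLeft z))
  simpa only [hreflect, mul_neg, integral_neg, sub_zero, neg_inj] using h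

end CauchyPompeiu

section ConvolutionAlongSubspace

open MeasureTheory Set Topology
open scoped ContDiff

variable {E G : Type*} [NormedAddCommGroup E] [NormedSpace ℝ E] [NormedAddCommGroup G]
  [NormedSpace ℝ G] {ι : G →L[ℝ] E} {π : E →L[ℝ] G} {φ : E → ℂ} {U : Set E} {k : Set G}
  {X : E × E} {p : E}

theorem eventuallyEq_zero_of_notMem {q : E} (hk : IsClosed k) (hφk : ∀ q, π q ∉ k → φ q = 0)
    (hq : π q ∉ k) : φ =ᶠ[𝓝 q] 0 := by
  filter_upwards [π.continuous.continuousAt.preimage_mem_nhds (hk.isOpen_compl.mem_nhds hq)]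
    with x hx using hφk x hx

theorem complexDerivs_eq_zero_of_notMem (hk : IsClosed k) (hφk : ∀ q, π q ∉ k → φ q = 0)
    (w : List (E × E)) (q : E) (hq : π q ∉ k) : complexDerivs w φ q = 0 := by
  rw [(complexDerivs_congr (eventuallyEq_zero_of_notMem hk hφk hq) w).eq_of_nhds,
    complexDerivs_zero, Pi.zero_apply]

theorem hasCompactSupport_comp_sub (hι : ∀ w, π (ι w) = w) (hk : IsCompact k)
    (hφk : ∀ q, π q ∉ k → φ q = 0) (p : E) : HasCompactSupport fun w => φ (p - ι w) :=
  .intro (hk.image (continuous_const.sub continuous_id : Continuous fun x => π p - x)) fun w hw =>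
    hφk _ fun h => hw ⟨_, h, by simp [hι]⟩

/-- The continuous linear map `(p, x) ↦ p + ι (x - π p)` replacing the component of `p` along `ι`,
read off by the left inverse `π` of `ι`, by `x`. -/
def replaceAlong (ι : G →L[ℝ] E) (π : E →L[ℝ] G) : E × G →L[ℝ] E :=
  .fst ℝ E G + ι ∘L (.snd ℝ E G - π ∘L .fst ℝ E G)

theorem replaceAlong_apply (p : E) (x : G) : replaceAlong ι π (p, x) = p + ι (x - π p) := by
  simp [replaceAlong]

theorem replaceAlong_sub (p : E) (w : G) : replaceAlong ι π (p, π p - w) = p - ι w := by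
  simp [replaceAlong_apply, sub_eq_add_neg]

theorem contDiffAt_comp_replaceAlong (hUι : ∀ p ∈ U, ∀ w, p + ι w ∈ U)
    (hφ : ∀ p ∈ U, ContDiffAt ℝ ∞ φ p) (hp : p ∈ U) (x : G) :
    ContDiffAt ℝ ∞ (φ ∘ replaceAlong ι π) (p, x) := by
  refine (hφ _ ?_).comp (p, x) (replaceAlong ι π).contDiff.contDiffAt
  rw [replaceAlong_apply]
  exact hUι p hp _

theorem complexDeriv_comp_replaceAlong {x : G} (hφ : DifferentiableAt ℝ φ (replaceAlong ι π (p, x)))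
    (Y : G × G) : complexDeriv Y (fun z => φ (replaceAlong ι π (p, z))) x =
      complexDeriv (ι Y.1, ι Y.2) φ (replaceAlong ι π (p, x)) := by
  have hR : HasFDerivAt (fun z => replaceAlong ι π (p, z)) ι x := by
    simp only [replaceAlong_apply]
    exact (ι.hasFDerivAt.comp x ((hasFDerivAt_id x).sub_const _)).const_add p
  have hcomp : fderiv ℝ (fun z => φ (replaceAlong ι π (p, z))) x = _ :=
    (hφ.hasFDerivAt.comp x hR).fderiv
  simp only [complexDeriv, hcomp]
  rfl

variable [MeasurableSpace G] {μ : Measure G} {K : G → ℂ}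

/-- Convolution of `φ : E → ℂ` with a kernel `K` on `G` along the directions `ι : G → E`. -/
def convAlong (μ : Measure G) (K : G → ℂ) (ι : G →L[ℝ] E) (φ : E → ℂ) : E → ℂ :=
  fun p => ∫ w, K w * φ (p - ι w) ∂μ

theorem convAlong_eq_zero (h : ∀ w, φ (p - ι w) = 0) : convAlong μ K ι φ p = 0 := by
  simp [convAlong, h]

theorem convAlong_eq_convolution (π : E →L[ℝ] G) (p : E) :
    convAlong μ K ι φ p = convolution K (fun x => φ (replaceAlong ι π (p, x)))
      (ContinuousLinearMap.mul ℝ ℂ) μ (π p) := by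
  simp [convAlong, convolution, replaceAlong_apply, sub_eq_add_neg]

theorem norm_convAlong_le [ProperSpace G] (hK : LocallyIntegrable K μ) (hι : ∀ w, π (ι w) = w)
    (hφk : ∀ q, π q ∉ k → φ q = 0) {R C : ℝ} (hR : ∀ x ∈ k, ‖π p - x‖ ≤ R)
    (hC : ∀ w, ‖φ (p - ι w)‖ ≤ C) :
    ‖convAlong μ K ι φ p‖ ≤ (∫ w in Metric.closedBall 0 R, ‖K w‖ ∂μ) * C := by
  have hvanish (w : G) (hw : w ∉ Metric.closedBall 0 R) : K w * φ (p - ι w) = 0 := by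
    rw [hφk _ fun h => hw (by simpa [hι] using hR _ h), mul_zero]
  rw [convAlong, ← setIntegral_eq_integral_of_forall_compl_eq_zero hvanish, ← integral_mul_const]
  refine norm_integral_le_of_norm_le
    ((hK.integrableOn_isCompact (isCompact_closedBall 0 R)).norm.mul_const C)
    (.of_forall fun w => ?_)
  rw [norm_mul]
  exact mul_le_mul_of_nonneg_left (hC w) (norm_nonneg _)

variable [BorelSpace G]

theorem integrable_mul_comp_sub (hK : LocallyIntegrable K μ)
    (hι : ∀ w, π (ι w) = w) (hk : IsCompact k) (hφk : ∀ q, π q ∉ k → φ q = 0)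
    (hφ : ∀ w, ContinuousAt φ (p - ι w)) : Integrable (fun w => K w * φ (p - ι w)) μ :=
  hK.integrable_smul_right_of_hasCompactSupport
    (continuous_iff_continuousAt.2 fun w => (hφ w).comp (f := fun w => p - ι w) (by fun_prop))
    (hasCompactSupport_comp_sub hι hk hφk p)

theorem contDiffAt_convAlong (hK : LocallyIntegrable K μ) (hι : ∀ w, π (ι w) = w)
    (hk : IsCompact k) (hφk : ∀ q, π q ∉ k → φ q = 0) (hU : IsOpen U)
    (hUι : ∀ p ∈ U, ∀ w, p + ι w ∈ U) (hφ : ∀ p ∈ U, ContDiffAt ℝ ∞ φ p) (hp : p ∈ U) :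
    ContDiffAt ℝ ∞ (convAlong μ K ι φ) p := by
  have hconv := contDiffOn_convolution_right_with_param_comp (n := ⊤)
    (ContinuousLinearMap.mul ℝ ℂ) (g := fun p x => φ (replaceAlong ι π (p, x)))
    π.contDiff.contDiffOn hU hk
    (fun p x _ hx => hφk _ (by simpa [replaceAlong_apply, hι] using hx)) hK
    fun q hq => (contDiffAt_comp_replaceAlong hUι hφ hq.1 q.2).contDiffWithinAt
  rw [funext (convAlong_eq_convolution (φ := φ) π)]
  exact hconv.contDiffAt (hU.mem_nhds hp)

theorem fderiv_convAlong (hK : LocallyIntegrable K μ) (hι : ∀ w, π (ι w) = w)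
    (hk : IsCompact k) (hφk : ∀ q, π q ∉ k → φ q = 0) (hU : IsOpen U)
    (hUι : ∀ p ∈ U, ∀ w, p + ι w ∈ U) (hφ : ∀ p ∈ U, ContDiffAt ℝ ∞ φ p) (hp : p ∈ U) (v : E) :
    fderiv ℝ (convAlong μ K ι φ) p v = convAlong μ K ι (fun q => fderiv ℝ φ q v) p := by
  have hφk' : ∀ q : E × G, q.2 ∉ k → (φ ∘ replaceAlong ι π) q = 0 := fun (q, x) hx =>
    hφk _ (by simpa [replaceAlong_apply, hι] using hx)
  have hsmooth (x : G) := contDiffAt_comp_replaceAlong (π := π) hUι hφ hp x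
  have hparam := hasFDerivAt_convolution_right_with_param (ContinuousLinearMap.mul ℝ ℂ)
    (g := fun p x => φ (replaceAlong ι π (p, x))) hU hk (fun q x _ hx => hφk' (q, x) hx) hK
    (fun q hq => ((contDiffAt_comp_replaceAlong hUι hφ hq.1 q.2).of_le
      (by simp)).contDiffWithinAt) (p, π p) hp
  have hcomp := hparam.comp p ((ContinuousLinearMap.id ℝ E).prod π).hasFDerivAt
  rw [funext (convAlong_eq_convolution (φ := φ) π)]
  refine (congrArg (· v) hcomp.fderiv).trans ?_
  rw [ContinuousLinearMap.comp_apply, convolution_precompR_apply _ hK]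
  · refine integral_congr_ae (.of_forall fun w => congrArg (K w * ·) ?_)
    have hw : DifferentiableAt ℝ φ (replaceAlong ι π (p, π p - w)) := by
      refine (hφ _ ?_).differentiableAt (by simp)
      simpa [replaceAlong_apply] using hUι p hp (-w)
    refine (congrArg (· (v, π v)) (fderiv_comp (p, π p - w) hw
      (replaceAlong ι π).differentiableAt)).trans ?_
    simp [replaceAlong_sub, replaceAlong_apply v]
  · refine .intro hk fun x hx => ?_
    have hzero : φ ∘ replaceAlong ι π =ᶠ[𝓝 (p, x)] 0 :=
      eventuallyEq_zero_of_notMem (π := .snd ℝ E G) hk.isClosed hφk' hx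
    exact hzero.fderiv_eq.trans (by simp)
  · exact continuous_iff_continuousAt.2 fun x =>
      ((hsmooth x).fderiv_right (m := 0) (by simp)).continuousAt.comp
        (f := fun x : G => (p, x)) (by fun_prop)

theorem complexDeriv_convAlong (hK : LocallyIntegrable K μ) (hι : ∀ w, π (ι w) = w)
    (hk : IsCompact k) (hφk : ∀ q, π q ∉ k → φ q = 0) (hU : IsOpen U)
    (hUι : ∀ p ∈ U, ∀ w, p + ι w ∈ U) (hφ : ∀ p ∈ U, ContDiffAt ℝ ∞ φ p) :
    EqOn (complexDeriv X (convAlong μ K ι φ)) (convAlong μ K ι (complexDeriv X φ)) U := by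
  intro p hp
  have hint (v : E) : Integrable (fun w => K w * fderiv ℝ φ (p - ι w) v) μ := by
    refine integrable_mul_comp_sub (π := π) hK hι hk (φ := fun q => fderiv ℝ φ q v)
      (fun q hq => ?_) fun w => ?_
    · rw [(eventuallyEq_zero_of_notMem hk.isClosed hφk hq).fderiv_eq]
      simp
    · have hw : p - ι w ∈ U := by simpa [sub_eq_add_neg] using hUι p hp (-w)
      exact ((hφ _ hw).fderiv_right (m := 0) (by simp)).continuousAt.clm_apply continuousAt_const
  rw [complexDeriv, fderiv_convAlong hK hι hk hφk hU hUι hφ hp,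
    fderiv_convAlong hK hι hk hφk hU hUι hφ hp, convAlong, convAlong, ← integral_const_mul,
    ← integral_add (hint _) ((hint _).const_mul I)]
  refine integral_congr_ae (.of_forall fun w => ?_)
  simp only [complexDeriv]
  ring

theorem complexDerivs_convAlong (hK : LocallyIntegrable K μ) (hι : ∀ w, π (ι w) = w)
    (hk : IsCompact k) (hφk : ∀ q, π q ∉ k → φ q = 0) (hU : IsOpen U)
    (hUι : ∀ p ∈ U, ∀ w, p + ι w ∈ U) (hφ : ∀ p ∈ U, ContDiffAt ℝ ∞ φ p) (w : List (E × E)) :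
    EqOn (complexDerivs w (convAlong μ K ι φ)) (convAlong μ K ι (complexDerivs w φ)) U := by
  induction w generalizing φ with
  | nil => exact fun _ _ => rfl
  | cons X w ih =>
    intro p hp
    have hX := (complexDeriv_convAlong (X := X) hK hι hk hφk hU hUι hφ).eventuallyEq_of_mem
      (hU.mem_nhds hp)
    exact (complexDerivs_congr hX w).eq_of_nhds.trans
      (ih (complexDerivs_eq_zero_of_notMem hk.isClosed hφk [X])
        (fun p hp => contDiffAt_complexDeriv (hφ p hp)) hp)

theorem dbar_convAlong_cauchyKernel {ι : ℂ →L[ℝ] E} {π : E →L[ℝ] ℂ} {k : Set ℂ}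
    (hι : ∀ w, π (ι w) = w)
    (hk : IsCompact k) (hφk : ∀ q, π q ∉ k → φ q = 0) (hU : IsOpen U)
    (hUι : ∀ p ∈ U, ∀ w, p + ι w ∈ U) (hφ : ∀ p ∈ U, ContDiffAt ℝ ∞ φ p) :
    EqOn (complexDeriv (ι (1 / 2), ι (I / 2)) (convAlong volume cauchyKernel ι φ)) φ U := by
  intro p hp
  have hsmooth : ContDiff ℝ ∞ fun z => φ (replaceAlong ι π (p, z)) :=
    contDiff_iff_contDiffAt.2 fun z => (contDiffAt_comp_replaceAlong hUι hφ hp z).comp z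
      (f := fun z => (p, z)) (by fun_prop)
  have hsupp : HasCompactSupport fun z => φ (replaceAlong ι π (p, z)) :=
    .intro hk fun z hz => hφk _ (by simpa [replaceAlong_apply, hι] using hz)
  have hpompeiu := integral_cauchyKernel_mul_dbar_sub (hsmooth.of_le (by simp)) hsupp (π p)
  rw [complexDeriv_convAlong locallyIntegrable_cauchyKernel hι hk hφk hU hUι hφ hp,
    convAlong]
  have hdbar (w : ℂ) : complexDeriv (ι (1 / 2), ι (I / 2)) φ (p - ι w) =
      complexDeriv (1 / 2, I / 2) (fun z => φ (replaceAlong ι π (p, z))) (π p - w) := by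
    have hw : p - ι w ∈ U := by simpa [sub_eq_add_neg] using hUι p hp (-w)
    rw [← replaceAlong_sub (π := π)] at hw ⊢
    exact (complexDeriv_comp_replaceAlong ((hφ _ hw).differentiableAt (by simp))
      (1 / 2, I / 2)).symm
  simp only [hdbar, hpompeiu]
  simp [replaceAlong_apply]

end ConvolutionAlongSubspace

section ExponentialDecay

open Asymptotics Filter
open scoped ContDiff

variable {n : ℕ} {S S' : Set (Pt n)} {f g : Pt n → ℂ}

/-- `f` decays exponentially in `ζ`, uniformly on `S`. -/
def ExpDecayOn (S : Set (Pt n)) (f : Pt n → ℂ) : Prop :=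
  ∃ h > 0, f =O[𝓟 S] fun p => Real.exp (-h * eucNorm p.2)

theorem isBigO_exp_neg_mul_eucNorm {h h' : ℝ} (hh : h' ≤ h) (l : Filter (Pt n)) :
    (fun p : Pt n => Real.exp (-h * eucNorm p.2)) =O[l] fun p => Real.exp (-h' * eucNorm p.2) := by
  refine .of_norm_le fun p => ?_
  rw [Real.norm_eq_abs, Real.abs_exp, Real.exp_le_exp]
  exact mul_le_mul_of_nonneg_right (neg_le_neg hh) (Real.sqrt_nonneg _)

theorem expDecayOn_zero : ExpDecayOn S 0 :=
  ⟨1, one_pos, isBigO_zero _ _⟩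

namespace ExpDecayOn

theorem mono (hf : ExpDecayOn S f) (h : S' ⊆ S) : ExpDecayOn S' f :=
  let ⟨c, hc, hfc⟩ := hf
  ⟨c, hc, hfc.mono (principal_mono.2 h)⟩

theorem congr (hf : ExpDecayOn S f) (h : Set.EqOn f g S) : ExpDecayOn S g :=
  let ⟨c, hc, hfc⟩ := hf
  ⟨c, hc, hfc.congr' (eventuallyEq_principal.2 h) .rfl⟩

theorem add (hf : ExpDecayOn S f) (hg : ExpDecayOn S g) : ExpDecayOn S (f + g) := by
  obtain ⟨a, ha, hfa⟩ := hf
  obtain ⟨b, hb, hgb⟩ := hg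
  exact ⟨min a b, lt_min ha hb,
    (hfa.trans (isBigO_exp_neg_mul_eucNorm (min_le_left a b) _)).add
      (hgb.trans (isBigO_exp_neg_mul_eucNorm (min_le_right a b) _))⟩

theorem bounded_mul (hf : f =O[𝓟 S] fun _ => (1 : ℝ)) (hg : ExpDecayOn S g) :
    ExpDecayOn S (f * g) :=
  let ⟨c, hc, hgc⟩ := hg
  ⟨c, hc, (hf.mul hgc).congr_right fun _ => one_mul _⟩

theorem const_smul (hf : ExpDecayOn S f) (c : ℂ) : ExpDecayOn S (c • f) :=
  let ⟨a, ha, hfa⟩ := hf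
  ⟨a, ha, hfa.const_smul_left c⟩

end ExpDecayOn

theorem expDecayOn_complexDerivs_mul {κ : Type*} {X : κ → Pt n × Pt n}
    (hf : ∀ p ∈ S, ContDiffAt ℝ ∞ f p) (hg : ∀ p ∈ S, ContDiffAt ℝ ∞ g p)
    (hfX : ∀ w : List κ, complexDerivs (w.map X) f =O[𝓟 S] fun _ => (1 : ℝ))
    (hgX : ∀ w : List κ, ExpDecayOn S (complexDerivs (w.map X) g)) (w : List κ) :
    ExpDecayOn S (complexDerivs (w.map X) (f * g)) := by
  induction w generalizing f g with
  | nil => exact .bounded_mul (hfX []) (hgX [])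
  | cons a w ih =>
    have hf' (p) (hp : p ∈ S) : ContDiffAt ℝ ∞ (complexDeriv (X a) f) p :=
      contDiffAt_complexDeriv (hf p hp)
    have hg' (p) (hp : p ∈ S) : ContDiffAt ℝ ∞ (complexDeriv (X a) g) p :=
      contDiffAt_complexDeriv (hg p hp)
    have hleibniz := (ih hf' hg (fun w => hfX (a :: w)) hgX).add
      (ih hf hg' hfX fun w => hgX (a :: w))
    refine hleibniz.congr fun p hp => ?_
    have hsum := complexDerivs_add ((hf' p hp).mul (hg p hp)) ((hf p hp).mul (hg' p hp)) (w.map X)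
    exact (hsum.symm.trans (complexDerivs_congr
      (complexDeriv_mul (hf p hp) (hg p hp)).symm (w.map X))).eq_of_nhds

end ExponentialDecay

section CutOff

open Topology
open scoped ContDiff

variable {E F : Type*} [NormedAddCommGroup E] [NormedSpace ℝ E]
  [NormedAddCommGroup F] [NormedSpace ℝ F] {π : E →L[ℝ] F} {χ : F → ℂ} {f : E → ℂ} {p : E}

theorem cutoff_mul_eventuallyEq_zero (hp : π p ∉ tsupport χ) : (χ ∘ π) * f =ᶠ[𝓝 p] 0 :=
  eventuallyEq_zero_of_notMem (isClosed_tsupport χ)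
    (fun q hq => by simp [image_eq_zero_of_notMem_tsupport hq]) hp

theorem contDiffAt_cutoff_mul (hχ : ContDiff ℝ ∞ χ)
    (hf : π p ∈ tsupport χ → ContDiffAt ℝ ∞ f p) : ContDiffAt ℝ ∞ ((χ ∘ π) * f) p := by
  by_cases hp : π p ∈ tsupport χ
  · exact (hχ.comp π.contDiff).contDiffAt.mul (hf hp)
  · exact contDiffAt_const.congr_of_eventuallyEq (cutoff_mul_eventuallyEq_zero hp)

end CutOff

section NullFunctions

open Set Topology
open scoped ContDiff Pointwise

variable {n : ℕ} {Γ G P : Set (Cn n)} {f g : Pt n → ℂ}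

/-- The inclusion of `ℂ` as the `i`-th axis of `ℂ^n_z`. -/
def axis (i : Fin n) : ℂ →L[ℝ] Pt n :=
  .inl ℝ (Cn n) (Cn n) ∘L .single ℝ (fun _ => ℂ) i

/-- The coordinate function `z_i`. -/
def zCoord (i : Fin n) : Pt n →L[ℝ] ℂ :=
  .proj i ∘L .fst ℝ (Cn n) (Cn n)

theorem zCoord_axis (i : Fin n) (w : ℂ) : zCoord i (axis i w) = w := by
  simp [zCoord, axis]

/-- The vector fields `∂/∂z_i` (as `Sum.inl i`) and `∂/∂z̄_i` (as `Sum.inr i`). -/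
def wirtingerField : Fin n ⊕ Fin n → Pt n × Pt n
  | .inl i => (axis i (1 / 2), axis i (-(I / 2)))
  | .inr i => (axis i (1 / 2), axis i (I / 2))

/-- The derivative whose vanishing in all directions `v` is holomorphy in `ζ`. -/
def dbarZeta (v : Cn n) : (Pt n → ℂ) → Pt n → ℂ :=
  complexDeriv ((0, v), (0, I • v))

/-- The functions on `P × G` that satisfy the conditions defining a null-symbol: smoothness,
holomorphy in `ζ`, and exponential decay of all `z`-derivatives on every truncated cone
`{tζ : ζ ∈ K, t > δ}` with `K ⊆ Γ` compact and `δ = δ(K)`. -/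
structure IsNullOn (Γ P G : Set (Cn n)) (f : Pt n → ℂ) : Prop where
  contDiffAt : ∀ p ∈ P ×ˢ G, ContDiffAt ℝ ∞ f p
  dbarZeta_eq_zero : ∀ p ∈ P ×ˢ G, ∀ v, dbarZeta v f =ᶠ[𝓝 p] 0
  expDecayOn : ∀ K ⊆ Γ, IsCompact K → ∃ δ : ℝ, ∀ w : List (Fin n ⊕ Fin n),
    ExpDecayOn (P ×ˢ (G ∩ Ioi δ • K)) (complexDerivs (w.map wirtingerField) f)

theorem isNullOn_zero : IsNullOn Γ P G 0 where
  contDiffAt _ _ := contDiffAt_const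
  dbarZeta_eq_zero _ _ _ := .of_eq complexDeriv_zero
  expDecayOn _ _ _ := ⟨0, fun w => by simpa [complexDerivs_zero] using expDecayOn_zero⟩

namespace IsNullOn

theorem mono {P' : Set (Cn n)} (hf : IsNullOn Γ P G f) (h : P' ⊆ P) : IsNullOn Γ P' G f where
  contDiffAt p hp := hf.contDiffAt p (prod_mono_left h hp)
  dbarZeta_eq_zero p hp := hf.dbarZeta_eq_zero p (prod_mono_left h hp)
  expDecayOn K hK hKc :=
    let ⟨δ, hδ⟩ := hf.expDecayOn K hK hKc
    ⟨δ, fun w => (hδ w).mono (prod_mono_left h)⟩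

theorem add (hf : IsNullOn Γ P G f) (hg : IsNullOn Γ P G g) : IsNullOn Γ P G (f + g) where
  contDiffAt p hp := (hf.contDiffAt p hp).add (hg.contDiffAt p hp)
  dbarZeta_eq_zero p hp v := by
    have hsum := (hf.dbarZeta_eq_zero p hp v).add (hg.dbarZeta_eq_zero p hp v)
    rw [add_zero] at hsum
    exact (complexDeriv_add (hf.contDiffAt p hp) (hg.contDiffAt p hp)).trans hsum
  expDecayOn K hK hKc := by
    obtain ⟨δ, hδ⟩ := hf.expDecayOn K hK hKc
    obtain ⟨δ', hδ'⟩ := hg.expDecayOn K hK hKc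
    have hsub {ε : ℝ} (hε : ε ≤ max δ δ') :
        P ×ˢ (G ∩ Ioi (max δ δ') • K) ⊆ P ×ˢ (G ∩ Ioi ε • K) := by gcongr
    refine ⟨max δ δ', fun w => (((hδ w).mono (hsub (le_max_left ..))).add
      ((hδ' w).mono (hsub (le_max_right ..)))).congr fun p hp => ?_⟩
    have hp' : p ∈ P ×ˢ G := ⟨hp.1, hp.2.1⟩
    exact (complexDerivs_add (hf.contDiffAt p hp') (hg.contDiffAt p hp') _).symm.eq_of_nhds

theorem const_smul (hf : IsNullOn Γ P G f) (c : ℂ) : IsNullOn Γ P G (c • f) where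
  contDiffAt p hp := (hf.contDiffAt p hp).const_smul c
  dbarZeta_eq_zero p hp v := by
    filter_upwards [hf.dbarZeta_eq_zero p hp v] with x hx
    simpa [dbarZeta, complexDeriv_const_smul] using .inr hx
  expDecayOn K hK hKc :=
    let ⟨δ, hδ⟩ := hf.expDecayOn K hK hKc
    ⟨δ, fun w => complexDerivs_const_smul (f := f) c _ ▸ (hδ w).const_smul c⟩

theorem complexDeriv_wirtingerField (hf : IsNullOn Γ P G f) (a : Fin n ⊕ Fin n) :
    IsNullOn Γ P G (complexDeriv (wirtingerField a) f) where
  contDiffAt p hp := contDiffAt_complexDeriv (hf.contDiffAt p hp)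
  dbarZeta_eq_zero p hp v := by
    refine (complexDeriv_comm (hf.contDiffAt p hp)).trans ?_
    exact (complexDeriv_congr (hf.dbarZeta_eq_zero p hp v)).trans (.of_eq complexDeriv_zero)
  expDecayOn K hK hKc :=
    let ⟨δ, hδ⟩ := hf.expDecayOn K hK hKc
    ⟨δ, fun w => hδ (a :: w)⟩

theorem sum {κ : Type*} {s : Finset κ} {F : κ → Pt n → ℂ} (hF : ∀ i ∈ s, IsNullOn Γ P G (F i)) :
    IsNullOn Γ P G (∑ i ∈ s, F i) :=
  Finset.sum_induction _ _ (fun _ _ => .add) isNullOn_zero hF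

theorem sub (hf : IsNullOn Γ P G f) (hg : IsNullOn Γ P G g) : IsNullOn Γ P G (f - g) := by
  simpa [sub_eq_add_neg] using hf.add (hg.const_smul (-1))

end IsNullOn

end NullFunctions

section CauchyTransform

open Asymptotics Filter MeasureTheory Set
open scoped ContDiff Pointwise

variable {n : ℕ} {A : Fin n → Set ℂ} {Γ G H : Set (Cn n)} {f : Pt n → ℂ} {k : Fin n} {χ : ℂ → ℂ}
  {p : Pt n}

/-- The solution of `∂u/∂z̄_k = χ(z_k) f` given by the Cauchy transform in the variable `z_k`. -/
def cauchyTransform (k : Fin n) (χ : ℂ → ℂ) (f : Pt n → ℂ) : Pt n → ℂ :=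
  convAlong volume cauchyKernel (axis k) ((χ ∘ zCoord k) * f)

/-- The set `P × G`, with `P = ∏ A_j`, enlarged by letting the coordinate `z_k` be arbitrary. -/
def zCylinder (k : Fin n) (A : Fin n → Set ℂ) (G : Set (Cn n)) : Set (Pt n) :=
  univ.pi (Function.update A k univ) ×ˢ G

theorem mem_zCylinder :
    p ∈ zCylinder k A G ↔ (∀ j ≠ k, p.1 j ∈ A j) ∧ p.2 ∈ G := by
  simp only [zCylinder, mem_prod, mem_univ_pi,
    Function.forall_update_iff A (fun j s => p.1 j ∈ s), mem_univ, true_and]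

theorem pi_prod_subset_zCylinder : univ.pi A ×ˢ G ⊆ zCylinder k A G := fun _ hp =>
  mem_zCylinder.2 ⟨fun j _ => hp.1 j trivial, hp.2⟩

theorem mem_pi_prod_of_mem_zCylinder (hp : p ∈ zCylinder k A G) (hpk : zCoord k p ∈ A k) :
    p ∈ univ.pi A ×ˢ G := by
  rw [mem_zCylinder] at hp
  refine ⟨fun j _ => ?_, hp.2⟩
  by_cases hj : j = k
  · exact hj ▸ hpk
  · exact hp.1 j hj

theorem add_axis_mem_zCylinder (p : Pt n) (hp : p ∈ zCylinder k A G) (w : ℂ) :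
    p + axis k w ∈ zCylinder k A G := by
  simp only [mem_zCylinder] at hp ⊢
  exact ⟨fun j hj => by simpa [axis, hj] using hp.1 j hj, by simpa [axis] using hp.2⟩

theorem sub_axis_mem_zCylinder (p : Pt n) (hp : p ∈ zCylinder k A G) (w : ℂ) :
    p - axis k w ∈ zCylinder k A G := by
  simpa [sub_eq_add_neg] using add_axis_mem_zCylinder p hp (-w)

theorem isOpen_zCylinder (hA : ∀ j, IsOpen (A j)) (hG : IsOpen G) : IsOpen (zCylinder k A G) := by
  refine (isOpen_set_pi finite_univ fun j _ => ?_).prod hG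
  obtain rfl | hj := eq_or_ne j k
  · simp
  · simpa [hj] using hA j

/-- `χ` is a smooth function on `ℂ` with compact support contained in `s`. -/
structure IsCutoff (χ : ℂ → ℂ) (s : Set ℂ) : Prop where
  contDiff : ContDiff ℝ ∞ χ
  hasCompactSupport : HasCompactSupport χ
  tsupport_subset : tsupport χ ⊆ s

theorem cutoff_mul_eq_zero (q : Pt n) (hq : zCoord k q ∉ tsupport χ) :
    ((χ ∘ zCoord k) * f) q = 0 :=
  (cutoff_mul_eventuallyEq_zero hq).eq_of_nhds

theorem contDiffAt_cutoff_mul_of_mem_zCylinder (hχ : IsCutoff χ (A k))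
    (hf : ∀ p ∈ univ.pi A ×ˢ G, ContDiffAt ℝ ∞ f p) (p : Pt n) (hp : p ∈ zCylinder k A G) :
    ContDiffAt ℝ ∞ ((χ ∘ zCoord k) * f) p :=
  contDiffAt_cutoff_mul hχ.contDiff fun hpk =>
    hf p (mem_pi_prod_of_mem_zCylinder hp (hχ.tsupport_subset hpk))

theorem contDiffAt_cauchyTransform (hA : ∀ j, IsOpen (A j)) (hG : IsOpen G)
    (hχ : IsCutoff χ (A k)) (hf : ∀ p ∈ univ.pi A ×ˢ G, ContDiffAt ℝ ∞ f p)
    (hp : p ∈ zCylinder k A G) : ContDiffAt ℝ ∞ (cauchyTransform k χ f) p :=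
  contDiffAt_convAlong locallyIntegrable_cauchyKernel (zCoord_axis k) hχ.hasCompactSupport
    cutoff_mul_eq_zero (isOpen_zCylinder hA hG) add_axis_mem_zCylinder
    (contDiffAt_cutoff_mul_of_mem_zCylinder hχ hf) hp

theorem complexDerivs_cauchyTransform (hA : ∀ j, IsOpen (A j)) (hG : IsOpen G)
    (hχ : IsCutoff χ (A k)) (hf : ∀ p ∈ univ.pi A ×ˢ G, ContDiffAt ℝ ∞ f p)
    (w : List (Pt n × Pt n)) :
    EqOn (complexDerivs w (cauchyTransform k χ f))
      (convAlong volume cauchyKernel (axis k) (complexDerivs w ((χ ∘ zCoord k) * f)))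
      (zCylinder k A G) :=
  complexDerivs_convAlong locallyIntegrable_cauchyKernel (zCoord_axis k) hχ.hasCompactSupport
    cutoff_mul_eq_zero (isOpen_zCylinder hA hG) add_axis_mem_zCylinder
    (contDiffAt_cutoff_mul_of_mem_zCylinder hχ hf) w

theorem dbar_cauchyTransform (hA : ∀ j, IsOpen (A j)) (hG : IsOpen G)
    (hχ : IsCutoff χ (A k)) (hf : ∀ p ∈ univ.pi A ×ˢ G, ContDiffAt ℝ ∞ f p) :
    EqOn (complexDeriv (wirtingerField (.inr k)) (cauchyTransform k χ f)) ((χ ∘ zCoord k) * f)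
      (zCylinder k A G) :=
  dbar_convAlong_cauchyKernel (zCoord_axis k) hχ.hasCompactSupport
    cutoff_mul_eq_zero (isOpen_zCylinder hA hG) add_axis_mem_zCylinder
    (contDiffAt_cutoff_mul_of_mem_zCylinder hχ hf)

theorem complexDeriv_cauchyTransform_eq_zero (hA : ∀ j, IsOpen (A j)) (hG : IsOpen G)
    (hχ : IsCutoff χ (A k)) (hf : ∀ p ∈ univ.pi A ×ˢ G, ContDiffAt ℝ ∞ f p)
    {X : Pt n × Pt n} (hX₁ : zCoord k X.1 = 0) (hX₂ : zCoord k X.2 = 0)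
    (hfX : EqOn (complexDeriv X f) 0 (univ.pi A ×ˢ G)) :
    EqOn (complexDeriv X (cauchyTransform k χ f)) 0 (zCylinder k A G) := by
  intro p hp
  refine (complexDerivs_cauchyTransform hA hG hχ hf [X] hp).trans (convAlong_eq_zero fun w => ?_)
  by_cases hqk : zCoord k (p - axis k w) ∈ tsupport χ
  · have hq : p - axis k w ∈ univ.pi A ×ˢ G :=
      mem_pi_prod_of_mem_zCylinder (sub_axis_mem_zCylinder p hp w) (hχ.tsupport_subset hqk)
    have hleibniz := (complexDeriv_mul (X := X)
      (hχ.contDiff.comp (zCoord k).contDiff).contDiffAt (hf _ hq)).eq_of_nhds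
    refine hleibniz.trans ?_
    rw [Pi.add_apply, Pi.mul_apply, Pi.mul_apply, hfX hq,
      complexDeriv_comp_continuousLinearMap _ (hχ.contDiff.differentiable (by simp)), hX₁, hX₂]
    simp [complexDeriv]
  · exact complexDerivs_eq_zero_of_notMem (isClosed_tsupport χ) cutoff_mul_eq_zero [X] _ hqk

theorem expDecayOn_convAlong_cauchyKernel (hAk : Bornology.IsBounded (A k))
    {s : Set ℂ} (hs : IsCompact s) (hfs : ∀ q, zCoord k q ∉ s → f q = 0)
    (hf : ExpDecayOn (zCylinder k A H) f) :
    ExpDecayOn (univ.pi A ×ˢ H) (convAlong volume cauchyKernel (axis k) f) := by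
  obtain ⟨h, hh, hfh⟩ := hf
  obtain ⟨C, hC⟩ := isBigO_principal.1 hfh
  obtain ⟨R, hR⟩ := isBounded_iff_forall_norm_le.1 (hAk.sub hs.isBounded)
  refine ⟨h, hh, isBigO_principal.2
    ⟨(∫ w in Metric.closedBall 0 R, ‖cauchyKernel w‖) * C, fun p hp => ?_⟩⟩
  rw [mul_assoc]
  refine norm_convAlong_le locallyIntegrable_cauchyKernel (zCoord_axis k) hfs
    (fun x hx => hR _ (sub_mem_sub (hp.1 k trivial) hx)) fun w => ?_
  have hw := hC _ (sub_axis_mem_zCylinder p (pi_prod_subset_zCylinder hp) w)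
  simpa [axis] using hw

theorem expDecayOn_complexDerivs_cutoff_mul (hχ : IsCutoff χ (A k))
    (hf : ∀ p ∈ univ.pi A ×ˢ H, ContDiffAt ℝ ∞ f p)
    (hfd : ∀ w : List (Fin n ⊕ Fin n),
      ExpDecayOn (univ.pi A ×ˢ H) (complexDerivs (w.map wirtingerField) f))
    (w : List (Fin n ⊕ Fin n)) :
    ExpDecayOn (zCylinder k A H) (complexDerivs (w.map wirtingerField) ((χ ∘ zCoord k) * f)) := by
  have hχd (w : List (Fin n ⊕ Fin n)) : complexDerivs (w.map wirtingerField) (χ ∘ zCoord k)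
      =O[𝓟 (univ.pi A ×ˢ H)] fun _ => (1 : ℝ) := by
    obtain ⟨C, hC⟩ := exists_norm_complexDerivs_comp_le hχ.contDiff hχ.hasCompactSupport (zCoord k)
      (w.map wirtingerField)
    exact isBigO_principal.2 ⟨C, fun p _ => by simpa using hC p⟩
  obtain ⟨h, hh, hbound⟩ := expDecayOn_complexDerivs_mul
    (fun _ _ => (hχ.contDiff.comp (zCoord k).contDiff).contDiffAt) hf hχd hfd w
  obtain ⟨C, hC⟩ := isBigO_principal.1 hbound
  refine ⟨h, hh, isBigO_principal.2 ⟨max C 0, fun p hp => ?_⟩⟩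
  by_cases hpk : zCoord k p ∈ tsupport χ
  · refine (hC p (mem_pi_prod_of_mem_zCylinder hp (hχ.tsupport_subset hpk))).trans ?_
    gcongr
    exact le_max_left ..
  · rw [complexDerivs_eq_zero_of_notMem (isClosed_tsupport χ) cutoff_mul_eq_zero _ p hpk, norm_zero]
    positivity

theorem IsNullOn.cauchyTransform (hA : ∀ j, IsOpen (A j)) (hG : IsOpen G)
    (hAk : Bornology.IsBounded (A k)) (hχ : IsCutoff χ (A k)) (hf : IsNullOn Γ (univ.pi A) G f) :
    IsNullOn Γ (univ.pi A) G (cauchyTransform k χ f) where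
  contDiffAt p hp := contDiffAt_cauchyTransform hA hG hχ hf.contDiffAt (pi_prod_subset_zCylinder hp)
  dbarZeta_eq_zero p hp v := by
    have hzero := complexDeriv_cauchyTransform_eq_zero (X := ((0, v), (0, I • v))) hA hG hχ
      hf.contDiffAt (by simp [zCoord]) (by simp [zCoord])
      fun q hq => (hf.dbarZeta_eq_zero q hq v).eq_of_nhds
    exact hzero.eventuallyEq_of_mem
      ((isOpen_zCylinder hA hG).mem_nhds (pi_prod_subset_zCylinder hp))
  expDecayOn K hK hKc := by
    obtain ⟨δ, hδ⟩ := hf.expDecayOn K hK hKc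
    have hG' : univ.pi A ×ˢ (G ∩ Ioi δ • K) ⊆ univ.pi A ×ˢ G := prod_mono_right inter_subset_left
    refine ⟨δ, fun w => ?_⟩
    have hcutoff := expDecayOn_complexDerivs_cutoff_mul hχ
      (fun p hp => hf.contDiffAt p (hG' hp)) hδ w
    refine (expDecayOn_convAlong_cauchyKernel hAk hχ.hasCompactSupport
      (complexDerivs_eq_zero_of_notMem (isClosed_tsupport χ) cutoff_mul_eq_zero _)
      hcutoff).congr fun p hp => ?_
    exact (complexDerivs_cauchyTransform hA hG hχ hf.contDiffAt _
      (pi_prod_subset_zCylinder (hG' hp))).symm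

end CauchyTransform

section KoszulComplex

open Finset Topology
open scoped ContDiff

variable {E κ : Type*} [NormedAddCommGroup E] [NormedSpace ℝ E] [LinearOrder κ]
  {X : κ → E × E} {F F' : Finset κ → E → ℂ} {S T : Finset κ} {i k : κ} {p : E}

/-- The sign with which `k` is moved to its place in the increasing enumeration of `insert k S`. -/
def insertSign (k : κ) (S : Finset κ) : ℂ :=
  (-1) ^ #{j ∈ S | j < k}

theorem insertSign_mul_self (k : κ) (S : Finset κ) : insertSign k S * insertSign k S = 1 := by
  simp [insertSign, ← mul_pow]

theorem insertSign_erase_of_le (h : k ≤ i) : insertSign k (S.erase i) = insertSign k S := by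
  rw [insertSign, insertSign, filter_erase, erase_eq_of_notMem (by simp [h])]

theorem insertSign_erase_of_lt (hi : i ∈ S) (h : i < k) :
    insertSign k (S.erase i) = -insertSign k S := by
  have hmem : i ∈ {j ∈ S | j < k} := by simp [hi, h]
  rw [insertSign, insertSign, filter_erase, ← card_erase_add_one hmem, pow_succ]
  ring

theorem insertSign_mul_insertSign_erase (hi : i ∈ S) (hk : k ∈ S) (hik : i ≠ k) :
    insertSign k S * insertSign i (S.erase k) = -(insertSign i S * insertSign k (S.erase i)) := by
  rcases hik.lt_or_gt with h | h
  · rw [insertSign_erase_of_le h.le, insertSign_erase_of_lt hi h]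
    ring
  · rw [insertSign_erase_of_lt hk h, insertSign_erase_of_le h.le]
    ring

/-- The differential of the form `∑ F_S dx^S` with respect to the constant complex vector fields
`X_k`; for `X_k = ∂/∂z̄_k` it is `∂̄`. The coefficients of all degrees are treated at once. -/
def formDeriv (X : κ → E × E) (F : Finset κ → E → ℂ) (S : Finset κ) : E → ℂ :=
  ∑ k ∈ S, insertSign k S • complexDeriv (X k) (F (S.erase k))

theorem formDeriv_add (hF : ∀ S, ContDiffAt ℝ ∞ (F S) p) (hF' : ∀ S, ContDiffAt ℝ ∞ (F' S) p)
    (S : Finset κ) : formDeriv X (F + F') S p = formDeriv X F S p + formDeriv X F' S p := by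
  simp only [formDeriv, Finset.sum_apply, Pi.smul_apply, ← sum_add_distrib, ← smul_add]
  exact sum_congr rfl fun k _ => congrArg _ (complexDeriv_add (hF _) (hF' _)).eq_of_nhds

theorem sum_sum_erase_eq_zero {M : Type*} [AddCommGroup M] [IsAddTorsionFree M] (a : κ → κ → M)
    (ha : ∀ k ∈ S, ∀ i ∈ S, i ≠ k → a k i = -a i k) : ∑ k ∈ S, ∑ i ∈ S.erase k, a k i = 0 := by
  refine self_eq_neg.1 ?_
  calc ∑ k ∈ S, ∑ i ∈ S.erase k, a k i
      = ∑ k ∈ S, ∑ i ∈ S.erase k, -a i k := sum_congr rfl fun k hk =>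
        sum_congr rfl fun i hi => ha k hk i (mem_of_mem_erase hi) (ne_of_mem_erase hi)
    _ = ∑ i ∈ S, ∑ k ∈ S.erase i, -a i k := sum_comm' (by grind)
    _ = -∑ k ∈ S, ∑ i ∈ S.erase k, a k i := by simp only [sum_neg_distrib]

theorem formDeriv_formDeriv (hF : ∀ S, ContDiffAt ℝ ∞ (F S) p) (S : Finset κ) :
    formDeriv X (formDeriv X F) S p = 0 := by
  have hexpand (k : κ) : complexDeriv (X k) (formDeriv X F (S.erase k)) p =
      ∑ i ∈ S.erase k, insertSign i (S.erase k) *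
        complexDeriv (X k) (complexDeriv (X i) (F ((S.erase k).erase i))) p := by
    have hsmooth (i : κ) : ContDiffAt ℝ ∞
        (insertSign i (S.erase k) • complexDeriv (X i) (F ((S.erase k).erase i))) p :=
      (contDiffAt_complexDeriv (hF _)).const_smul (insertSign i (S.erase k))
    have hsum := (complexDeriv_sum (X := X k) (S.erase k) fun i _ => hsmooth i).eq_of_nhds
    simpa only [formDeriv, complexDeriv_const_smul, Finset.sum_apply, Pi.smul_apply,
      smul_eq_mul] using hsum
  rw [formDeriv]
  simp only [Finset.sum_apply, Pi.smul_apply, hexpand, smul_eq_mul, mul_sum]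
  refine sum_sum_erase_eq_zero _ fun k hk i hi hik => ?_
  rw [erase_right_comm, (complexDeriv_comm (hF _)).eq_of_nhds, ← mul_assoc, ← mul_assoc,
    insertSign_mul_insertSign_erase hi hk hik, neg_mul]

theorem complexDeriv_erase_eq_zero_of_closed (hclosed : formDeriv X F (insert k S) p = 0)
    (hvanish : ∀ R, ¬R ⊆ insert k T → F R =ᶠ[𝓝 p] 0) (hkS : k ∉ S) (hST : ¬S ⊆ T) (hi : i ∈ S) :
    complexDeriv (X i) (F ((insert k S).erase i)) p = 0 := by
  have hzero {R : Finset κ} (j : κ) (hR : ¬R ⊆ insert k T) : complexDeriv (X j) (F R) p = 0 := by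
    simpa [complexDeriv_zero] using (complexDeriv_congr (X := X j) (hvanish R hR)).eq_of_nhds
  by_cases h : (insert k S).erase i ⊆ insert k T
  · obtain ⟨j, hjS, hjT⟩ := not_subset.1 hST
    have hji : j = i := by
      by_contra hne
      have := h (mem_erase.2 ⟨hne, mem_insert_of_mem hjS⟩)
      grind
    have hiT : i ∉ insert k T := by grind
    have hrest (j : κ) (hji : j ≠ i) : complexDeriv (X j) (F ((insert k S).erase j)) p = 0 :=
      hzero j fun hsub => hiT (hsub (by grind))
    rw [formDeriv, Finset.sum_apply, sum_eq_single_of_mem i (mem_insert_of_mem hi)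
      fun j _ hji => by simp [hrest j hji]] at hclosed
    exact (mul_eq_zero.1 hclosed).resolve_left
      (left_ne_zero_of_mul_eq_one (insertSign_mul_self i (insert k S)))
  · exact hzero i h

end KoszulComplex

section PoincareLemma

open Set
open scoped ContDiff

variable {n : ℕ} {A B : Fin n → Set ℂ} {Γ P G : Set (Cn n)} {F : Finset (Fin n) → Pt n → ℂ}
  {S T : Finset (Fin n)} {k : Fin n} {χ : ℂ → ℂ}

theorem exists_isCutoff_eqOn_one {s t : Set ℂ} (hs : IsCompact s) (ht : IsOpen t) (hst : s ⊆ t) :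
    ∃ χ, IsCutoff χ t ∧ EqOn χ 1 s := by
  obtain ⟨L, hL, hsL, hLt⟩ := exists_compact_between hs ht hst
  obtain ⟨χ, hχ₀, hχ₁, -⟩ := exists_contMDiffMap_zero_one_of_isClosed (n := ⊤)
    (modelWithCornersSelf ℝ ℂ) isOpen_interior.isClosed_compl hs.isClosed
    (disjoint_compl_left_iff_subset.2 hsL)
  have hsupp : tsupport (fun z => (χ z : ℂ)) ⊆ L := by
    refine closure_minimal (fun z hz => ?_) hL.isClosed
    by_contra hzL
    exact hz (by simp [hχ₀ fun h => hzL (interior_subset h)])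
  exact ⟨fun z => χ z, ⟨ofRealCLM.contDiff.comp χ.contMDiff.contDiff,
    .of_isClosed_subset hL (isClosed_tsupport _) hsupp, hsupp.trans hLt⟩,
    fun z hz => by simp [hχ₁ hz]⟩

/-- The vector fields `∂/∂z̄_k`. -/
def dbarField (k : Fin n) : Pt n × Pt n :=
  wirtingerField (.inr k)

theorem IsNullOn.formDeriv (hF : ∀ S, IsNullOn Γ P G (F S)) (S : Finset (Fin n)) :
    IsNullOn Γ P G (formDeriv dbarField F S) :=
  .sum fun _ _ => ((hF _).complexDeriv_wirtingerField _).const_smul _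

/-- The homotopy operator that removes `dz̄_k` from a form: contraction with `∂/∂z̄_k`, followed by
the Cauchy transform in the variable `z_k`. -/
def cauchyHomotopy (k : Fin n) (χ : ℂ → ℂ) (F : Finset (Fin n) → Pt n → ℂ) (S : Finset (Fin n)) :
    Pt n → ℂ :=
  if k ∈ S then 0 else insertSign k S • cauchyTransform k χ (F (insert k S))

theorem IsNullOn.cauchyHomotopy (hA : ∀ j, IsOpen (A j)) (hG : IsOpen G)
    (hAk : Bornology.IsBounded (A k)) (hχ : IsCutoff χ (A k))
    (hF : ∀ S, IsNullOn Γ (univ.pi A) G (F S)) (S : Finset (Fin n)) :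
    IsNullOn Γ (univ.pi A) G (cauchyHomotopy k χ F S) := by
  unfold _root_.cauchyHomotopy
  split_ifs
  · exact isNullOn_zero
  · exact ((hF _).cauchyTransform hA hG hAk hχ).const_smul _

theorem formDeriv_cauchyHomotopy_of_mem (hA : ∀ j, IsOpen (A j)) (hG : IsOpen G)
    (hχ : IsCutoff χ (A k)) (hF : ∀ p ∈ univ.pi A ×ˢ G, ContDiffAt ℝ ∞ (F S) p) (hkS : k ∈ S) :
    EqOn (formDeriv dbarField (cauchyHomotopy k χ F) S) ((χ ∘ zCoord k) * F S)
      (univ.pi A ×ˢ G) := by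
  intro p hp
  have hother (i : Fin n) (hik : i ≠ k) : cauchyHomotopy k χ F (S.erase i) = 0 :=
    if_pos (Finset.mem_erase.2 ⟨hik.symm, hkS⟩)
  rw [formDeriv, Finset.sum_apply, Finset.sum_eq_single_of_mem k hkS fun i _ hik => by
      simp [hother i hik, complexDeriv_zero],
    cauchyHomotopy, if_neg (Finset.notMem_erase k S), Finset.insert_erase hkS,
    complexDeriv_const_smul, smul_smul, insertSign_erase_of_le le_rfl, insertSign_mul_self,
    one_smul]
  exact dbar_cauchyTransform hA hG hχ hF (pi_prod_subset_zCylinder hp)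

theorem formDeriv_cauchyHomotopy_of_notMem (hA : ∀ j, IsOpen (A j)) (hG : IsOpen G)
    (hχ : IsCutoff χ (A k)) (hF : ∀ S, ∀ p ∈ univ.pi A ×ˢ G, ContDiffAt ℝ ∞ (F S) p)
    (hclosed : ∀ S, EqOn (formDeriv dbarField F S) 0 (univ.pi A ×ˢ G))
    (hvanish : ∀ R, ¬R ⊆ insert k T → EqOn (F R) 0 (univ.pi A ×ˢ G))
    (hkS : k ∉ S) (hST : ¬S ⊆ T) :
    EqOn (formDeriv dbarField (cauchyHomotopy k χ F) S) 0 (univ.pi A ×ˢ G) := by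
  have hΩ : IsOpen (univ.pi A ×ˢ G) := (isOpen_set_pi finite_univ fun j _ => hA j).prod hG
  intro p hp
  rw [formDeriv, Finset.sum_apply]
  refine Finset.sum_eq_zero fun i hi => ?_
  have hik : i ≠ k := ne_of_mem_of_not_mem hi hkS
  have hFi : EqOn (complexDeriv (dbarField i) (F ((insert k S).erase i))) 0 (univ.pi A ×ˢ G) :=
    fun q hq => complexDeriv_erase_eq_zero_of_closed (hclosed _ hq)
      (fun R hR => (hvanish R hR).eventuallyEq_of_mem (hΩ.mem_nhds hq)) hkS hST hi
  have hzero := complexDeriv_cauchyTransform_eq_zero hA hG hχ (hF _)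
    (by simp [dbarField, wirtingerField, zCoord, axis, hik.symm])
    (by simp [dbarField, wirtingerField, zCoord, axis, hik.symm]) hFi (pi_prod_subset_zCylinder hp)
  rw [cauchyHomotopy, if_neg fun h => hkS (Finset.mem_of_mem_erase h),
    ← Finset.erase_insert_of_ne hik.symm, complexDeriv_const_smul]
  simp [hzero]

/-- `F` is a `∂̄`-closed form on `P × G`, without component of degree `0`, whose coefficients are
null and vanish except for those of `dz̄^S` with `S ⊆ T`. -/
structure IsClosedNullForm (Γ P G : Set (Cn n)) (T : Finset (Fin n))
    (F : Finset (Fin n) → Pt n → ℂ) : Prop where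
  isNullOn : ∀ S, IsNullOn Γ P G (F S)
  closed : ∀ S, EqOn (formDeriv dbarField F S) 0 (P ×ˢ G)
  empty : EqOn (F ∅) 0 (P ×ˢ G)
  vanish : ∀ S, ¬S ⊆ T → EqOn (F S) 0 (P ×ˢ G)

theorem IsClosedNullForm.sub_formDeriv_cauchyHomotopy (hA : ∀ j, IsOpen (A j)) (hG : IsOpen G)
    (hAk : Bornology.IsBounded (A k)) (hχ : IsCutoff χ (A k)) {s : Set ℂ} (hs : s ⊆ A k)
    (hχs : EqOn χ 1 s) (hF : IsClosedNullForm Γ (univ.pi A) G (insert k T) F) :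
    IsClosedNullForm Γ (univ.pi (Function.update A k s)) G T
      (F - formDeriv dbarField (cauchyHomotopy k χ F)) := by
  have hsub : univ.pi (Function.update A k s) ⊆ univ.pi A :=
    pi_mono fun j _ => update_le_iff.2 ⟨hs, fun _ _ => le_rfl⟩ j
  have hV := IsNullOn.cauchyHomotopy hA hG hAk hχ hF.isNullOn
  have hdV := IsNullOn.formDeriv hV
  have hF' (S) : IsNullOn Γ (univ.pi A) G ((F - formDeriv dbarField (cauchyHomotopy k χ F)) S) :=
    (hF.isNullOn S).sub (hdV S)
  refine ⟨fun S => (hF' S).mono hsub, fun S p hp => ?_, fun p hp => ?_, fun S hST p hp => ?_⟩ <;>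
    have hp' := prod_mono_left hsub hp
  · have hadd := formDeriv_add (X := dbarField) (fun S => (hF' S).contDiffAt p hp')
      (fun S => (hdV S).contDiffAt p hp') S
    rw [sub_add_cancel, hF.closed S hp', formDeriv_formDeriv fun S => (hV S).contDiffAt p hp',
      add_zero] at hadd
    exact hadd.symm
  · simp [formDeriv, hF.empty hp']
  · by_cases hkS : k ∈ S
    · have hpk : zCoord k p ∈ s := by simpa [zCoord] using hp.1 k trivial
      have hχp : χ (zCoord k p) = 1 := hχs hpk
      simp [formDeriv_cauchyHomotopy_of_mem hA hG hχ (hF.isNullOn S).contDiffAt hkS hp', hχp]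
    · have hST' : ¬S ⊆ insert k T := fun h => hST ((Finset.subset_insert_iff_of_notMem hkS).1 h)
      simp [hF.vanish S hST' hp', formDeriv_cauchyHomotopy_of_notMem hA hG hχ
        (fun S => (hF.isNullOn S).contDiffAt) hF.closed hF.vanish hkS hST hp']

theorem IsClosedNullForm.exists_formDeriv_eq (hB : ∀ j, IsOpen (B j)) (hG : IsOpen G)
    (hA : ∀ j, IsOpen (A j)) (hBA : ∀ j, B j ⊆ A j)
    (hT : ∀ j ∈ T, Bornology.IsBounded (A j) ∧ closure (B j) ⊆ A j)
    (hF : IsClosedNullForm Γ (univ.pi A) G T F) :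
    ∃ U, (∀ S, IsNullOn Γ (univ.pi B) G (U S)) ∧
      ∀ S, EqOn (formDeriv dbarField U S) (F S) (univ.pi B ×ˢ G) := by
  have hsub {A : Fin n → Set ℂ} (h : ∀ j, B j ⊆ A j) : univ.pi B ×ˢ G ⊆ univ.pi A ×ˢ G :=
    prod_mono_left (pi_mono fun j _ => h j)
  induction T using Finset.induction_on generalizing A F with
  | empty =>
    refine ⟨0, fun _ => isNullOn_zero, fun S p hp => ?_⟩
    have hFp : F S p = 0 := by
      obtain rfl | hS := S.eq_empty_or_nonempty
      · exact hF.empty (hsub hBA hp)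
      · exact hF.vanish S (by simpa using hS.ne_empty) (hsub hBA hp)
    simp [formDeriv, complexDeriv_zero, hFp]
  | insert k T hkT ih =>
    obtain ⟨hAk, hBk⟩ := hT k (Finset.mem_insert_self k T)
    have hBkc : IsCompact (closure (B k)) := (hAk.subset (hBA k)).isCompact_closure
    obtain ⟨χ, hχ, hχB⟩ := exists_isCutoff_eqOn_one hBkc (hA k) hBk
    have hV := IsNullOn.cauchyHomotopy hA hG hAk hχ hF.isNullOn
    have hBA' (j) : B j ⊆ Function.update A k (B k) j :=
      le_update_iff.2 ⟨le_rfl, fun i _ => hBA i⟩ j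
    obtain ⟨U, hU, hUF⟩ := ih (A := Function.update A k (B k))
      (fun j => (Function.forall_update_iff A fun _ s => IsOpen s).2 ⟨hB k, fun i _ => hA i⟩ j)
      hBA' (fun j hj => by
        rw [Function.update_of_ne (ne_of_mem_of_not_mem hj hkT)]
        exact hT j (Finset.mem_insert_of_mem hj))
      (hF.sub_formDeriv_cauchyHomotopy hA hG hAk hχ (hBA k) (hχB.mono subset_closure))
    refine ⟨U + cauchyHomotopy k χ F,
      fun S => (hU S).add ((hV S).mono (pi_mono fun j _ => hBA j)), fun S p hp => ?_⟩
    rw [formDeriv_add (fun S => (hU S).contDiffAt p hp)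
      (fun S => (hV S).contDiffAt p (hsub hBA hp)), hUF S hp]
    simp

end PoincareLemma

section HolomorphyInZeta

theorem differentiableAt_complex_iff_fderiv_I_smul {E F : Type*} [NormedAddCommGroup E]
    [NormedSpace ℂ E] [NormedAddCommGroup F] [NormedSpace ℂ F] {f : E → F} {x : E}
    (hf : DifferentiableAt ℝ f x) :
    DifferentiableAt ℂ f x ↔ ∀ v, fderiv ℝ f x (I • v) = I • fderiv ℝ f x v := by
  rw [differentiableAt_iff_restrictScalars ℝ hf]
  refine ⟨fun ⟨g, hg⟩ v => by simp [← hg], fun h => ?_⟩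
  have hsmul (c : ℂ) (v : E) : fderiv ℝ f x (c • v) = c • fderiv ℝ f x v := by
    conv_lhs => rw [← re_add_im c, add_smul, mul_smul, coe_smul, coe_smul, map_add, map_smul,
      map_smul, h]
    conv_rhs => rw [← re_add_im c, add_smul, mul_smul, coe_smul, coe_smul]
  exact ⟨{ fderiv ℝ f x with map_smul' := hsmul }, rfl⟩

variable {n : ℕ} {f : Pt n → ℂ} {p : Pt n}

theorem differentiableAt_slice_iff_dbarZeta_eq_zero (hf : DifferentiableAt ℝ f p) :
    DifferentiableAt ℂ (fun ζ => f (p.1, ζ)) p.2 ↔ ∀ v, dbarZeta v f p = 0 := by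
  have hslice : HasFDerivAt (fun ζ => f (p.1, ζ)) (fderiv ℝ f p ∘L .inr ℝ (Cn n) (Cn n)) p.2 :=
    hf.hasFDerivAt.comp p.2 (hasFDerivAt_prodMk_right p.1 p.2)
  rw [differentiableAt_complex_iff_fderiv_I_smul hslice.differentiableAt, hslice.fderiv]
  refine forall_congr' fun v => ?_
  have hI (a b : ℂ) : b = I * a ↔ a + I * b = 0 := by
    constructor <;> intro h
    · linear_combination I * h + a * I_mul_I
    · linear_combination -I * h + b * I_mul_I
  exact hI _ _

end HolomorphyInZeta

section MixedDerivatives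

variable {n : ℕ}

theorem map_axis_div_two (L : Pt n →L[ℝ] ℂ) (i : Fin n) (w : ℂ) :
    L (axis i (w / 2)) = 1 / 2 * L (Pi.single i w, 0) := by
  have hw : w / 2 = (2⁻¹ : ℝ) • w := by simp [div_eq_inv_mul]
  rw [hw, map_smul, map_smul]
  simp [axis]

theorem dz_eq_complexDeriv (i : Fin n) :
    dz i = complexDeriv (wirtingerField (.inl i)) := by
  ext f p
  simp only [dz, complexDeriv, wirtingerField, map_neg, map_axis_div_two]
  ring

theorem dzbar_eq_complexDeriv (i : Fin n) :
    dzbar i = complexDeriv (wirtingerField (.inr i)) := by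
  ext f p
  simp only [dzbar, complexDeriv, wirtingerField, map_axis_div_two]
  ring

/-- The word of vector fields whose iterated derivative is `∂^α_z ∂^β_z̄`. It is reversed because
`complexDerivs` applies the head of a list first. -/
def mixedWord (α β : Fin n → ℕ) : List (Fin n ⊕ Fin n) :=
  ((List.ofFn fun i => List.replicate (α i) (Sum.inl i)) ++
    List.ofFn fun i => List.replicate (β i) (Sum.inr i)).flatten.reverse

theorem mixedDeriv_eq_complexDerivs (α β : Fin n → ℕ) (f : Pt n → ℂ) :
    mixedDeriv α β f = complexDerivs ((mixedWord α β).map wirtingerField) f := by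
  have hfoldr (m : ℕ) (a : Fin n ⊕ Fin n) : (complexDeriv (wirtingerField a))^[m] = fun g =>
      (List.replicate m a).foldr (fun b g => complexDeriv (wirtingerField b) g) g := by
    induction m with
    | zero => rfl
    | succ m ih => rw [Function.iterate_succ', ih]; rfl
  simp only [mixedDeriv, dz_eq_complexDeriv, dzbar_eq_complexDeriv, hfoldr, mixedWord,
    complexDerivs, List.foldl_map, List.foldl_reverse, List.foldr_flatten, List.foldr_append,
    List.ofFn_eq_map, List.foldr_map]

theorem exists_perm_mixedWord (w : List (Fin n ⊕ Fin n)) : ∃ α β, w.Perm (mixedWord α β) := by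
  let : BEq (Fin n ⊕ Fin n) := instBEqOfDecidableEq
  refine ⟨fun i => w.count (.inl i), fun i => w.count (.inr i), List.perm_iff_count.2 ?_⟩
  rintro (i | i) <;>
    simp [mixedWord, List.count_flatten, List.map_ofFn, List.sum_ofFn, List.count_replicate]

end MixedDerivatives

section Wedges

open Asymptotics Set Topology
open scoped ContDiff Pointwise

variable {n : ℕ} {D P Γ G : Set (Cn n)} {V W K L : Set (Pt n)} {f : Pt n → ℂ} {δ : ℝ}

/-- The cone over `K` truncated at `δ`; truncation at `0` gives the full cone. -/
def truncatedCone (δ : ℝ) (K : Set (Pt n)) : Set (Pt n) :=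
  {p | ∃ t, δ < t ∧ ∃ q ∈ K, p = (q.1, t • q.2)}

theorem truncatedCone_subset_iff : truncatedCone δ K ⊆ W ↔
    ∀ p ∈ K, ∀ t, δ < t → (p.1, t • p.2) ∈ W :=
  ⟨fun h p hp t ht => h ⟨t, ht, p, hp, rfl⟩, fun h _ ⟨t, ht, q, hq, hpq⟩ => hpq ▸ h q hq t ht⟩

theorem truncatedCone_prod (δ : ℝ) (P Γ : Set (Cn n)) :
    truncatedCone δ (P ×ˢ Γ) = P ×ˢ (Ioi δ • Γ) := by
  ext ⟨z, ζ⟩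
  simp only [truncatedCone, mem_prod, Set.mem_smul, mem_Ioi, mem_ofPred_eq, Prod.exists,
    Prod.mk.injEq]
  grind

theorem isCone_truncatedCone_zero (K : Set (Pt n)) : IsCone (truncatedCone 0 K) := by
  rintro _ ⟨s, hs, q, hq, rfl⟩ t ht
  exact ⟨t * s, mul_pos ht hs, q, hq, by simp [smul_smul]⟩

theorem subset_truncatedCone_zero : K ⊆ truncatedCone 0 K := fun p hp =>
  ⟨1, one_pos, p, hp, by simp⟩

theorem isOpen_truncatedCone (hK : IsOpen K) (hδ : 0 ≤ δ) : IsOpen (truncatedCone δ K) := by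
  have hunion : truncatedCone δ K = ⋃ t ∈ Ioi δ, {p | (p.1, t⁻¹ • p.2) ∈ K} := by
    refine Subset.antisymm (truncatedCone_subset_iff.2 fun p hp t ht => ?_) ?_
    · exact mem_biUnion ht (by simpa [smul_smul, (hδ.trans_lt ht).ne'] using hp)
    · refine iUnion₂_subset fun t ht p hp => ⟨t, ht, _, hp, ?_⟩
      simp [smul_smul, (hδ.trans_lt ht).ne']
  rw [hunion]
  exact isOpen_biUnion fun t _ => hK.preimage (by fun_prop)

theorem relCpt_iff_of_isCompact (hK : IsCompact K) : RelCpt K V ↔ K ⊆ V := by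
  simp [RelCpt, hK.isClosed.closure_eq, hK]

theorem relCpt_interior (hK : IsCompact K) (hKV : K ⊆ V) : RelCpt (interior K) V :=
  have hsub : closure (interior K) ⊆ K := closure_minimal interior_subset hK.isClosed
  ⟨hK.of_isClosed_subset isClosed_closure hsub, hsub.trans hKV⟩

theorem IsInfWedge.exists_truncatedCone_subset (hW : IsInfWedge V W) (hK : RelCpt K V) :
    ∃ δ > 0, truncatedCone δ K ⊆ W := by
  simpa only [truncatedCone_subset_iff] using hW.2 K hK

theorem IsInfWedge.exists_truncatedCone_subset_interior (hW : IsInfWedge V W) (hV : IsOpen V)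
    (hK : IsCompact K) (hKV : K ⊆ V) : ∃ δ > 0, truncatedCone δ K ⊆ interior W := by
  obtain ⟨L, hL, hKL, hLV⟩ := exists_compact_between hK hV hKV
  obtain ⟨δ, hδ, hδW⟩ := hW.exists_truncatedCone_subset (relCpt_interior hL hLV)
  refine ⟨δ, hδ, fun p ⟨t, ht, q, hq, hpq⟩ => ?_⟩
  exact interior_maximal hδW (isOpen_truncatedCone isOpen_interior hδ.le) ⟨t, ht, q, hKL hq, hpq⟩

theorem IsNullSymbolInf.exists_expDecayOn_truncatedCone (hf : IsNullSymbolInf V W f)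
    (hV : IsOpen V) (hK : IsCompact K) (hKV : K ⊆ V) :
    ∃ δ, ∀ α β, ExpDecayOn (truncatedCone δ K) (mixedDeriv α β f) := by
  obtain ⟨L, hL, hKL, hLV⟩ := exists_compact_between hK hV hKV
  obtain ⟨W', -, hW', hdecay⟩ := hf.2.2 (truncatedCone 0 (interior L))
    (isOpen_truncatedCone isOpen_interior le_rfl) (isCone_truncatedCone_zero _)
    ⟨interior L, relCpt_interior hL hLV, rfl⟩
  obtain ⟨δ, -, hδ⟩ := hW'.exists_truncatedCone_subset
    ((relCpt_iff_of_isCompact hK).2 (hKL.trans subset_truncatedCone_zero))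
  refine ⟨δ, fun α β => ?_⟩
  obtain ⟨h, C, hh, -, hC⟩ := hdecay α β
  exact ⟨h, hh, isBigO_principal.2 ⟨C, fun p hp => by simpa using hC p (hδ hp)⟩⟩

/-- The set of those `ζ ∈ Γ` for which `P × {ζ}` lies in the interior of `W`. -/
def wedgeFiber (P Γ : Set (Cn n)) (W : Set (Pt n)) : Set (Cn n) :=
  {ζ ∈ Γ | P ×ˢ {ζ} ⊆ interior W}

theorem prod_wedgeFiber_subset : P ×ˢ wedgeFiber P Γ W ⊆ interior W :=
  fun _ hp => hp.2.2 ⟨hp.1, rfl⟩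

theorem isOpen_wedgeFiber (hP : IsCompact P) (hΓ : IsOpen Γ) : IsOpen (wedgeFiber P Γ W) := by
  refine isOpen_iff_mem_nhds.2 fun ζ ⟨hζ, hPζ⟩ => ?_
  obtain ⟨u, v, -, hv, hPu, hζv, huv⟩ :=
    generalized_tube_lemma hP isCompact_singleton isOpen_interior hPζ
  filter_upwards [hΓ.mem_nhds hζ, hv.mem_nhds (hζv rfl)] with ξ hξ hξv
  exact ⟨hξ, (prod_mono hPu (singleton_subset_iff.2 hξv)).trans huv⟩

/-- `G` is an open infinitesimal wedge of type `Γ` in the variable `ζ` alone. -/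
structure IsZetaWedge (Γ G : Set (Cn n)) : Prop where
  isOpen : IsOpen G
  subset : G ⊆ Γ
  exists_smul_subset : ∀ K ⊆ Γ, IsCompact K → ∃ δ : ℝ, Ioi δ • K ⊆ G

theorem isZetaWedge_wedgeFiber (hD : IsOpen D) (hP : IsCompact P) (hPD : P ⊆ D) (hΓ : IsOpen Γ)
    (hΓcone : ∀ ζ ∈ Γ, ∀ t : ℝ, 0 < t → t • ζ ∈ Γ) (hW : IsInfWedge (D ×ˢ Γ) W) :
    IsZetaWedge Γ (wedgeFiber P Γ W) where
  isOpen := isOpen_wedgeFiber hP hΓ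
  subset := sep_subset _ _
  exists_smul_subset K hK hKc := by
    obtain ⟨δ, hδ, hδW⟩ := hW.exists_truncatedCone_subset_interior (hD.prod hΓ) (hP.prod hKc)
      (prod_mono hPD hK)
    rw [truncatedCone_prod] at hδW
    refine ⟨δ, fun ζ hζ => ⟨?_, (prod_mono_right (singleton_subset_iff.2 hζ)).trans hδW⟩⟩
    obtain ⟨t, ht, ξ, hξ, rfl⟩ := hζ
    exact hΓcone ξ (hK hξ) t (hδ.trans ht)

theorem IsNullSymbolInf.isNullOn_wedgeFiber (hf : IsNullSymbolInf (D ×ˢ Γ) W f) (hD : IsOpen D)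
    (hP : IsCompact P) (hPD : P ⊆ D) (hΓ : IsOpen Γ) : IsNullOn Γ P (wedgeFiber P Γ W) f := by
  have hsmooth (p) (hp : p ∈ interior W) : ContDiffAt ℝ ∞ f p :=
    hf.2.1.1.contDiffAt (mem_interior_iff_mem_nhds.1 hp)
  have hholo (p) (hp : p ∈ interior W) (v) : dbarZeta v f p = 0 := by
    have hnhds : {ζ | (p.1, ζ) ∈ W} ∈ 𝓝 p.2 :=
      (Continuous.prodMk_right p.1).continuousAt.preimage_mem_nhds
        (mem_interior_iff_mem_nhds.1 hp)
    exact (differentiableAt_slice_iff_dbarZeta_eq_zero ((hsmooth p hp).differentiableAt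
      (by simp))).1 ((hf.2.1.2 p.1).differentiableAt hnhds) v
  refine ⟨fun p hp => hsmooth p (prod_wedgeFiber_subset hp), fun p hp v => ?_, fun K hK hKc => ?_⟩
  · filter_upwards [isOpen_interior.mem_nhds (prod_wedgeFiber_subset hp)] with q hq
    exact hholo q hq v
  · obtain ⟨δ, hδ⟩ := hf.exists_expDecayOn_truncatedCone (hD.prod hΓ) (hP.prod hKc)
      (prod_mono hPD hK)
    refine ⟨δ, fun w => ?_⟩
    obtain ⟨α, β, hw⟩ := exists_perm_mixedWord w
    rw [truncatedCone_prod] at hδ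
    refine ((hδ α β).mono (prod_mono_right inter_subset_right)).congr fun p hp => ?_
    rw [mixedDeriv_eq_complexDerivs]
    exact (complexDerivs_perm (hsmooth p (prod_wedgeFiber_subset ⟨hp.1, hp.2.1⟩))
      (hw.map _).symm).eq_of_nhds

theorem exists_pos_subset_Ioi_smul {E : Type*} [NormedAddCommGroup E] [NormedSpace ℝ E]
    {K L : Set E} (hK : Bornology.IsBounded K) (hL : IsClosed L) (hL0 : (0 : E) ∉ L)
    (hLK : L ⊆ Ioi (0 : ℝ) • K) : ∃ ε : ℝ, 0 < ε ∧ L ⊆ Ioi ε • K := by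
  obtain ⟨R, hR, hKR⟩ := hK.exists_pos_norm_lt
  obtain ⟨r, hr, hrL⟩ := Metric.isOpen_iff.1 hL.isOpen_compl 0 hL0
  refine ⟨r / R, by positivity, fun ζ hζ => ?_⟩
  obtain ⟨t, ht, ξ, hξ, rfl⟩ := hLK hζ
  have hrt : r ≤ t * ‖ξ‖ := by
    by_contra! h
    exact hrL (by simpa [norm_smul, abs_of_pos (mem_Ioi.1 ht)] using h) hζ
  refine smul_mem_smul (mem_Ioi.2 ?_) hξ
  rw [div_lt_iff₀ hR]
  exact hrt.trans_lt (mul_lt_mul_of_pos_left (hKR ξ hξ) ht)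

theorem RelCpt.image_snd {P Γ : Set (Cn n)} (hK : RelCpt K (P ×ˢ Γ)) :
    IsCompact (Prod.snd '' closure K) ∧ Prod.snd '' closure K ⊆ Γ :=
  ⟨hK.1.image continuous_snd, (image_mono hK.2).trans (snd_image_prod_subset ..)⟩

theorem IsZetaWedge.isInfWedge (hG : IsZetaWedge Γ G) (P : Set (Cn n)) :
    IsInfWedge (P ×ˢ Γ) (P ×ˢ G) := by
  refine ⟨prod_mono_right hG.subset, fun K hK => ?_⟩
  obtain ⟨δ, hδ⟩ := hG.exists_smul_subset _ hK.image_snd.2 hK.image_snd.1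
  refine ⟨max δ 1, by positivity, fun p hp t ht => ⟨(hK.2 (subset_closure hp)).1, hδ ?_⟩⟩
  exact smul_mem_smul ((le_max_left ..).trans_lt ht) (mem_image_of_mem _ (subset_closure hp))

theorem truncatedCone_zero_subset_prod (hK : K ⊆ P ×ˢ Γ) :
    truncatedCone 0 K ⊆ P ×ˢ (Ioi (0 : ℝ) • (Prod.snd '' closure K)) :=
  truncatedCone_subset_iff.2 fun _ hp _ ht =>
    ⟨(hK hp).1, smul_mem_smul ht (mem_image_of_mem _ (subset_closure hp))⟩

theorem IsZetaWedge.isInfWedge_truncatedCone_inter (hG : IsZetaWedge Γ G) (hΓ0 : (0 : Cn n) ∉ Γ)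
    (hΓcone : ∀ ζ ∈ Γ, ∀ t : ℝ, 0 < t → t • ζ ∈ Γ) (hK : RelCpt K (P ×ˢ Γ)) (δ : ℝ) :
    IsInfWedge (truncatedCone 0 K)
      (truncatedCone 0 K ∩ P ×ˢ (G ∩ Ioi δ • (Prod.snd '' closure K))) := by
  refine ⟨inter_subset_left, fun L hL => ?_⟩
  have hLV := hL.2.trans (truncatedCone_zero_subset_prod (subset_closure.trans hK.2))
  have hcone : Ioi (0 : ℝ) • (Prod.snd '' closure K) ⊆ Γ := by
    rintro _ ⟨t, ht, ξ, hξ, rfl⟩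
    exact hΓcone ξ (hK.image_snd.2 hξ) t ht
  have hL₂ : IsCompact (Prod.snd '' closure L) := hL.1.image continuous_snd
  have hL₂K : Prod.snd '' closure L ⊆ Ioi (0 : ℝ) • (Prod.snd '' closure K) :=
    (image_mono hLV).trans (snd_image_prod_subset ..)
  obtain ⟨ε, hε, hLε⟩ := exists_pos_subset_Ioi_smul hK.image_snd.1.isBounded hL₂.isClosed
    (fun h => hΓ0 (hcone (hL₂K h))) hL₂K
  obtain ⟨δ', hδ'⟩ := hG.exists_smul_subset _ (hL₂K.trans hcone) hL₂
  refine ⟨max (max δ' 1) (δ / ε), by positivity, fun p hp t ht => ?_⟩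
  simp only [max_lt_iff] at ht
  obtain ⟨⟨htδ', ht1⟩, htδ⟩ := ht
  have hp₂ : p.2 ∈ Prod.snd '' closure L := mem_image_of_mem _ (subset_closure hp)
  obtain ⟨s, hs, ξ, hξ, hsξ⟩ := hLε hp₂
  refine ⟨isCone_truncatedCone_zero K p (hL.2 (subset_closure hp)) t (one_pos.trans ht1),
    (hLV (subset_closure hp)).1, hδ' (smul_mem_smul htδ' hp₂), t * s, ?_, ξ, hξ, ?_⟩
  · exact ((div_lt_iff₀ hε).1 htδ).trans (mul_lt_mul_of_pos_left hs (one_pos.trans ht1))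
  · simp only [← hsξ, smul_smul]

theorem IsNullOn.isNullSymbolInf (hf : IsNullOn Γ P G f) (hG : IsZetaWedge Γ G)
    (hΓ0 : (0 : Cn n) ∉ Γ) (hΓcone : ∀ ζ ∈ Γ, ∀ t : ℝ, 0 < t → t • ζ ∈ Γ) :
    IsNullSymbolInf (P ×ˢ Γ) (P ×ˢ G) f := by
  refine ⟨hG.isInfWedge P, ⟨fun p hp => (hf.contDiffAt p hp).contDiffWithinAt, ?_⟩, ?_⟩
  · intro z ζ hζ
    refine DifferentiableAt.differentiableWithinAt ?_
    exact (differentiableAt_slice_iff_dbarZeta_eq_zero (p := (z, ζ))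
      ((hf.contDiffAt _ hζ).differentiableAt (by simp))).2
      fun v => (hf.dbarZeta_eq_zero _ hζ v).self_of_nhds
  · rintro _ - - ⟨K, hK, rfl⟩
    obtain ⟨δ, hδ⟩ := hf.expDecayOn _ hK.image_snd.2 hK.image_snd.1
    refine ⟨_, inter_subset_right.trans (prod_mono_right inter_subset_left),
      hG.isInfWedge_truncatedCone_inter hΓ0 hΓcone hK δ, fun α β => ?_⟩
    obtain ⟨h, hh, hO⟩ := hδ (mixedWord α β)
    obtain ⟨C, hC, hbound⟩ := hO.exists_pos
    refine ⟨h, C, hh, hC, fun p hp => ?_⟩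
    rw [mixedDeriv_eq_complexDerivs]
    simpa using isBigOWith_principal.1 hbound p hp.2

end Wedges

section MultiIndices

open Set

variable {n m q : ℕ} {P Γ G : Set (Cn n)} {J : Fin m → Fin n}

theorem insertSign_univ_image (hJ : StrictMono J) (ℓ : Fin m) :
    insertSign (J ℓ) (Finset.univ.image J) = (-1) ^ (ℓ : ℕ) := by
  have hbelow : {j ∈ Finset.univ.image J | j < J ℓ} = (Finset.Iio ℓ).image J := by
    simp only [Finset.filter_image, hJ.lt_iff_lt, Finset.filter_gt_eq_Iio]
  rw [insertSign, hbelow, Finset.card_image_of_injective _ hJ.injective, Fin.card_Iio]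

theorem erase_univ_image {α : Type*} [DecidableEq α] {J : Fin (m + 1) → α}
    (hJ : Function.Injective J) (ℓ : Fin (m + 1)) :
    (Finset.univ.image J).erase (J ℓ) = Finset.univ.image (J ∘ ℓ.succAbove) := by
  rw [← Finset.image_image, Fin.image_succAbove_univ, Finset.compl_singleton,
    Finset.image_erase hJ]

theorem formDeriv_dbarField_univ_image {J : Fin (m + 1) → Fin n} (hJ : StrictMono J)
    (U : Finset (Fin n) → Pt n → ℂ) (x : Pt n) :
    formDeriv dbarField U (Finset.univ.image J) x = ∑ ℓ : Fin (m + 1), (-1 : ℂ) ^ (ℓ : ℕ) *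
      dzbar (J ℓ) (U (Finset.univ.image (J ∘ ℓ.succAbove))) x := by
  rw [formDeriv, Finset.sum_image hJ.injective.injOn, Finset.sum_apply]
  refine Finset.sum_congr rfl fun ℓ _ => ?_
  rw [Pi.smul_apply, smul_eq_mul, insertSign_univ_image hJ, erase_univ_image hJ.injective,
    dzbar_eq_complexDeriv, dbarField]

/-- A form of degree `m`, given by its coefficients on increasing multi-indices of length `m`, as a
form of mixed degree indexed by finite sets. -/
def finsetForm (f : (Fin m → Fin n) → Pt n → ℂ) (S : Finset (Fin n)) : Pt n → ℂ :=
  if h : S.card = m then f (S.orderEmbOfFin h) else 0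

theorem finsetForm_univ_image (f : (Fin m → Fin n) → Pt n → ℂ) (hJ : StrictMono J) :
    finsetForm f (Finset.univ.image J) = f J := by
  have hcard : (Finset.univ.image J).card = m := by
    simp [Finset.card_image_of_injective _ hJ.injective]
  rw [finsetForm, dif_pos hcard, ← Finset.orderEmbOfFin_unique hcard (by simp) hJ]

theorem exists_strictMono_univ_image_eq {S : Finset (Fin n)} (hS : S.card = m) :
    ∃ J : Fin m → Fin n, StrictMono J ∧ Finset.univ.image J = S :=
  ⟨S.orderEmbOfFin hS, (S.orderEmbOfFin hS).strictMono, S.image_orderEmbOfFin_univ hS⟩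

theorem formDeriv_dbarField_finsetForm {f : (Fin m → Fin n) → Pt n → ℂ} {x : Pt n}
    (hclosed : ∀ K : Fin (m + 1) → Fin n, StrictMono K →
      ∑ ℓ : Fin (m + 1), (-1 : ℂ) ^ (ℓ : ℕ) * dzbar (K ℓ) (f (K ∘ ℓ.succAbove)) x = 0)
    (S : Finset (Fin n)) : formDeriv dbarField (finsetForm f) S x = 0 := by
  by_cases hS : S.card = m + 1
  · obtain ⟨K, hK, rfl⟩ := exists_strictMono_univ_image_eq hS
    rw [formDeriv_dbarField_univ_image hK, ← hclosed K hK]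
    exact Finset.sum_congr rfl fun ℓ _ => by
      rw [finsetForm_univ_image _ (hK.comp (Fin.strictMono_succAbove ℓ))]
  · rw [formDeriv, Finset.sum_apply]
    refine Finset.sum_eq_zero fun k hk => ?_
    have hcard : (S.erase k).card ≠ m := fun h => hS (by rw [← h, Finset.card_erase_add_one hk])
    simp [finsetForm, hcard, complexDeriv_zero]

theorem isClosedNullForm_finsetForm {f : (Fin (q + 1) → Fin n) → Pt n → ℂ}
    (hf : ∀ J, StrictMono J → IsNullOn Γ P G (f J))
    (hclosed : ∀ K : Fin (q + 2) → Fin n, StrictMono K → ∀ x ∈ P ×ˢ G,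
      ∑ ℓ : Fin (q + 2), (-1 : ℂ) ^ (ℓ : ℕ) * dzbar (K ℓ) (f (K ∘ ℓ.succAbove)) x = 0) :
    IsClosedNullForm Γ P G Finset.univ (finsetForm f) where
  isNullOn S := by
    by_cases hS : S.card = q + 1
    · obtain ⟨J, hJ, rfl⟩ := exists_strictMono_univ_image_eq hS
      exact finsetForm_univ_image f hJ ▸ hf J hJ
    · rw [finsetForm, dif_neg hS]
      exact isNullOn_zero
  closed S x hx := formDeriv_dbarField_finsetForm (fun K hK => hclosed K hK x hx) S
  empty := by simp [finsetForm, EqOn]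
  vanish S hS := absurd S.subset_univ hS

end MultiIndices

section Dolbeault

open Set

variable {n p q : ℕ} {D Γ : Set (Cn n)} {W : Set (Pt n)} {B : Fin n → Set ℂ}

theorem exists_pi_isCompact_between {ι X : Type*} [Finite ι] [MetricSpace X] [ProperSpace X]
    {s : ι → Set X} {U : Set (ι → X)} (hs : ∀ i, IsCompact (s i)) (hU : IsOpen U)
    (hsU : univ.pi s ⊆ U) :
    ∃ t : ι → Set X, (∀ i, IsCompact (t i)) ∧ (∀ i, s i ⊆ interior (t i)) ∧ univ.pi t ⊆ U := by
  have := Fintype.ofFinite ι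
  obtain ⟨δ, hδ, hδU⟩ := (isCompact_univ_pi hs).exists_cthickening_subset_open hU hsU
  refine ⟨fun i => Metric.cthickening δ (s i), fun i => (hs i).cthickening, fun i => ?_, ?_⟩
  · exact (Metric.self_subset_thickening hδ _).trans
      (interior_maximal (Metric.thickening_subset_cthickening ..) Metric.isOpen_thickening)
  · intro z hz
    have hnear (i) : ∃ b ∈ s i, dist (z i) b ≤ δ := by
      simpa [(hs i).cthickening_eq_biUnion_closedBall hδ.le] using hz i (mem_univ i)
    choose b hbs hzb using hnear
    exact hδU (Metric.mem_cthickening_of_dist_le z b δ _ (fun i _ => hbs i)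
      ((dist_pi_le_iff hδ.le).2 hzb))

theorem dbar_solvable_nullSymbolInf_general (hD : IsOpen D) (hΓopen : IsOpen Γ)
    (hΓ0 : (0 : Cn n) ∉ Γ) (hΓcone : ∀ ζ ∈ Γ, ∀ t : ℝ, 0 < t → t • ζ ∈ Γ)
    (hW : IsInfWedge (D ×ˢ Γ) W) (f : (Fin p → Fin n) → (Fin (q + 1) → Fin n) → Pt n → ℂ)
    (hf : ∀ I J, StrictMono I → StrictMono J → IsNullSymbolInf (D ×ˢ Γ) W (f I J))
    (hclosed : ∀ I, StrictMono I → ∀ K : Fin (q + 2) → Fin n, StrictMono K → ∀ x ∈ W,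
      ∑ ℓ : Fin (q + 2), (-1 : ℂ) ^ (ℓ : ℕ) * dzbar (K ℓ) (f I (K ∘ ℓ.succAbove)) x = 0)
    (hB : ∀ j, IsOpen (B j)) (hBbdd : ∀ j, Bornology.IsBounded (B j))
    (hBD : univ.pi (fun j => closure (B j)) ⊆ D) :
    ∃ (W' : Set (Pt n)) (u : (Fin p → Fin n) → (Fin q → Fin n) → Pt n → ℂ),
      IsInfWedge (univ.pi B ×ˢ Γ) W' ∧
      (∀ I L, StrictMono I → IsNullSymbolInf (univ.pi B ×ˢ Γ) W' (u I L)) ∧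
      ∀ I J, StrictMono I → StrictMono J → ∀ x ∈ W', ∑ ℓ : Fin (q + 1), (-1 : ℂ) ^ (ℓ : ℕ) *
        dzbar (J ℓ) (u I (J ∘ ℓ.succAbove)) x = f I J x := by
  obtain ⟨A, hA, hBA, hAD⟩ :=
    exists_pi_isCompact_between (fun j => (hBbdd j).isCompact_closure) hD hBD
  let P := univ.pi A
  let G := wedgeFiber P Γ W
  have hP : IsCompact P := isCompact_univ_pi hA
  have hG : IsZetaWedge Γ G := isZetaWedge_wedgeFiber hD hP hAD hΓopen hΓcone hW
  have hAP : univ.pi (fun j => interior (A j)) ⊆ P := pi_mono fun _ _ => interior_subset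
  have hform (I) (hI : StrictMono I) :
      IsClosedNullForm Γ (univ.pi fun j => interior (A j)) G Finset.univ (finsetForm (f I)) :=
    isClosedNullForm_finsetForm
      (fun J hJ => ((hf I J hI hJ).isNullOn_wedgeFiber hD hP hAD hΓopen).mono hAP)
      fun K hK x hx => hclosed I hI K hK x
        (interior_subset (prod_wedgeFiber_subset ⟨hAP hx.1, hx.2⟩))
  choose! U hUnull hU using fun I hI => (hform I hI).exists_formDeriv_eq hB hG.isOpen
    (fun _ => isOpen_interior) (fun j => subset_closure.trans (hBA j))
    fun j _ => ⟨(hA j).isBounded.subset interior_subset, hBA j⟩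
  refine ⟨univ.pi B ×ˢ G, fun I L => U I (Finset.univ.image L), hG.isInfWedge _, ?_, ?_⟩
  · exact fun I L hI => (hUnull I hI _).isNullSymbolInf hG hΓ0 hΓcone
  · intro I J hI hJ x hx
    rw [← formDeriv_dbarField_univ_image hJ, hU I hI _ hx, finsetForm_univ_image _ hJ]

end Dolbeault

/-- (Dolbeault lemma for null-symbols of `C^∞`-type, Proposition
`exist` in the paper.) Let `D` be an open polydisc centered at the origin with radii
`r i`, `Γ` an open convex cone, `V = D × Γ`.  If the coefficients `f I J` (for `I, J`
strictly increasing multi-indices of lengths `p` and `q+1`) of a `∂̄_z`-closed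
`(p, q+1)`-form in `z` all belong to `𝔑^∞(V)` on a common infinitesimal wedge `W` of
type `V`, then on every polydisc `D'` with closure contained in `D` one can solve
`∂̄_z u = f` with coefficients `u I L ∈ 𝔑^∞(D' × Γ)`. -/
theorem dbar_solvable_nullSymbolInf {n p q : ℕ}
    (r : Fin n → ℝ) (hr : ∀ i, 0 < r i)
    (Γ : Set (Cn n)) (hΓopen : IsOpen Γ) (hΓ0 : (0 : Cn n) ∉ Γ)
    (hΓcone : ∀ ζ ∈ Γ, ∀ t : ℝ, 0 < t → t • ζ ∈ Γ) (hΓconv : Convex ℝ Γ)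
    (W : Set (Pt n))
    (hW : IsInfWedge ({z : Cn n | ∀ i, ‖z i‖ < r i} ×ˢ Γ) W)
    (f : (Fin p → Fin n) → (Fin (q + 1) → Fin n) → Pt n → ℂ)
    (hf : ∀ I J, StrictMono I → StrictMono J →
      IsNullSymbolInf ({z : Cn n | ∀ i, ‖z i‖ < r i} ×ˢ Γ) W (f I J))
    (hclosed : ∀ I, StrictMono I → ∀ K : Fin (q + 2) → Fin n, StrictMono K →
      ∀ x ∈ W, ∑ ℓ : Fin (q + 2), ((-1 : ℂ) ^ (ℓ : ℕ)) *
        dzbar (K ℓ) (f I (K ∘ ℓ.succAbove)) x = 0)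
    (c : Cn n) (r' : Fin n → ℝ) (hr' : ∀ i, 0 < r' i)
    (hsub : {z : Cn n | ∀ i, ‖z i - c i‖ ≤ r' i} ⊆ {z : Cn n | ∀ i, ‖z i‖ < r i}) :
    ∃ u : (Fin p → Fin n) → (Fin q → Fin n) → Pt n → ℂ,
      (∀ I L, StrictMono I → StrictMono L →
        ∃ Wu : Set (Pt n),
          IsNullSymbolInf ({z : Cn n | ∀ i, ‖z i - c i‖ < r' i} ×ˢ Γ) Wu (u I L)) ∧
      ∃ W'' : Set (Pt n),
        IsInfWedge ({z : Cn n | ∀ i, ‖z i - c i‖ < r' i} ×ˢ Γ) W'' ∧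
        ∀ I J, StrictMono I → StrictMono J →
          ∀ x ∈ W'', ∑ ℓ : Fin (q + 1), ((-1 : ℂ) ^ (ℓ : ℕ)) *
            dzbar (J ℓ) (u I (J ∘ ℓ.succAbove)) x = f I J x := by
  have hD : IsOpen {z : Cn n | ∀ i, ‖z i‖ < r i} := by
    simp only [Set.ofPred_forall]
    exact isOpen_iInter_of_finite fun i => isOpen_lt (by fun_prop) continuous_const
  have hD' : {z : Cn n | ∀ i, ‖z i - c i‖ < r' i} =
      Set.univ.pi fun i => Metric.ball (c i) (r' i) := by
    ext; simp [dist_eq_norm]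
  have hclosure : Set.univ.pi (fun i => closure (Metric.ball (c i) (r' i))) ⊆
      {z : Cn n | ∀ i, ‖z i‖ < r i} := fun z hz => hsub fun i => by
    simpa [dist_eq_norm] using Metric.closure_ball_subset_closedBall (hz i trivial)
  obtain ⟨W', u, hW', hu, heq⟩ := dbar_solvable_nullSymbolInf_general hD hΓopen hΓ0 hΓcone hW f hf
    hclosed (fun _ => Metric.isOpen_ball) (fun _ => Metric.isBounded_ball) hclosure
  rw [hD']
  exact ⟨u, fun I L hI _ => ⟨W', hu I L hI⟩, W', hW', heq⟩
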